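/- arXiv:2407.20217 — 2 statements merged into one kernel-verified Lean document; each statement's English description precedes it below -/
import Mathlib

section
/- Given k ≥ 2 and m ≥ 3k, consider a balanced weighting of D ∈ D_k which implies a graph G ∈ B_m(D). Then G minimizes d_3 within B_m(D_k) if and only if all 3-bonds of D are trivial and the π^v-values of D are balanced (the latter condition being vacuous when 3k divides m). -/
open Classical Finset

noncomputable section

/-- A finite multigraph: edges carry two (possibly equal) endpoints. -/
structure Multigraph where
  V : Type
  E : Type
  [fintV : Fintype V]
  [fintE : Fintype E]
  src : E → V
  tgt : E → V

attribute [instance] Multigraph.fintV Multigraph.fintE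

namespace Multigraph

variable (G : Multigraph)

/-- Number of vertices. -/
def nV : ℕ := Fintype.card G.V

/-- Number of edges (with multiplicity). -/
def nE : ℕ := Fintype.card G.E

/-- One step along an edge belonging to the edge set `S`. -/
def stepOn (S : Finset G.E) (u v : G.V) : Prop :=
  ∃ e ∈ S, (G.src e = u ∧ G.tgt e = v) ∨ (G.src e = v ∧ G.tgt e = u)

/-- The spanning subgraph with edge set `S` is connected. -/
def ConnOn (S : Finset G.E) : Prop :=
  ∀ u v : G.V, Relation.ReflTransGen (G.stepOn S) u v

/-- `G` is connected. -/
def Connected : Prop := G.ConnOn Finset.univ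

/-- The edge set `F` disconnects `G` (i.e. is a disconnection). -/
def Disconnects (F : Finset G.E) : Prop := ¬ G.ConnOn (Finset.univ \ F)

/-- `d i G`: the number of `i`-disconnections of `G`. -/
def d (i : ℕ) : ℕ :=
  ((Finset.univ : Finset (Finset G.E)).filter fun F => F.card = i ∧ G.Disconnects F).card

/-- The all-terminal reliability `R(G,p)`: each edge is independently retained with
probability `p`; this is the probability that the retained spanning subgraph is connected. -/
def rel (p : ℝ) : ℝ :=
  ∑ S : Finset G.E, if G.ConnOn S then p ^ S.card * (1 - p) ^ (G.nE - S.card) else 0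

/-- `e` is a bridge. -/
def IsBridge (e : G.E) : Prop := G.Disconnects {e}

def Bridgeless : Prop := ∀ e : G.E, ¬ G.IsBridge e

/-- The number of spanning trees of `G` (connected spanning subgraphs with `nV - 1` edges). -/
def treeCount : ℕ :=
  ((Finset.univ : Finset (Finset G.E)).filter fun S => S.card + 1 = G.nV ∧ G.ConnOn S).card

/-- The edge-connectivity: the least size of a disconnecting set of edges. -/
def edgeConnectivity : ℕ :=
  sInf {i : ℕ | ∃ F : Finset G.E, F.card = i ∧ G.Disconnects F}

/-- Degree of a vertex (a loop counts twice). -/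
def deg (v : G.V) : ℕ :=
  (Finset.univ.filter fun e => G.src e = v).card +
    (Finset.univ.filter fun e => G.tgt e = v).card

/-- The edges crossing the vertex set `A`. -/
def cutEdges (A : Finset G.V) : Finset G.E :=
  Finset.univ.filter fun e =>
    (G.src e ∈ A ∧ G.tgt e ∉ A) ∨ (G.src e ∉ A ∧ G.tgt e ∈ A)

/-- `F` is a cut: the set of edges crossing a nontrivial bipartition of the vertices. -/
def IsCut (F : Finset G.E) : Prop :=
  ∃ A : Finset G.V, A.Nonempty ∧ A ≠ Finset.univ ∧ F = G.cutEdges A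

/-- `F` is a bond: a minimal cut. -/
def IsBond (F : Finset G.E) : Prop :=
  G.IsCut F ∧ ∀ F' ⊆ F, G.IsCut F' → F' = F

/-- Number of `s`-bonds of `G`. -/
def bondCount (s : ℕ) : ℕ :=
  ((Finset.univ : Finset (Finset G.E)).filter fun F => F.card = s ∧ G.IsBond F).card

/-- Adjacency of vertices. -/
def Adj (u v : G.V) : Prop :=
  ∃ e : G.E, (G.src e = u ∧ G.tgt e = v) ∨ (G.src e = v ∧ G.tgt e = u)

/-- `G` is simple: no loops and no parallel edges. -/
def IsSimple : Prop :=
  (∀ e : G.E, G.src e ≠ G.tgt e) ∧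
    ∀ e f : G.E,
      ((G.src e = G.src f ∧ G.tgt e = G.tgt f) ∨ (G.src e = G.tgt f ∧ G.tgt e = G.src f)) →
        e = f

end Multigraph

/-- `G ∈ 𝒢_{n,m}`: connected with `n` vertices and `m` edges. -/
def memG (G : Multigraph) (n m : ℕ) : Prop :=
  G.nV = n ∧ G.nE = m ∧ G.Connected

/-- Isomorphism of multigraphs. -/
structure MGIso (G H : Multigraph) where
  vMap : G.V ≃ H.V
  eMap : G.E ≃ H.E
  ends_eq : ∀ e : G.E,
    (H.src (eMap e) = vMap (G.src e) ∧ H.tgt (eMap e) = vMap (G.tgt e)) ∨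
    (H.src (eMap e) = vMap (G.tgt e) ∧ H.tgt (eMap e) = vMap (G.src e))

def IsIso (G H : Multigraph) : Prop := Nonempty (MGIso G H)

/-- `G` is `p`-optimal in `𝒢_{n,m}`. -/
def pOptimal (G : Multigraph) (n m : ℕ) (p : ℝ) : Prop :=
  memG G n m ∧ ∀ H : Multigraph, memG H n m → H.rel p ≤ G.rel p

/-- `G` is uniquely optimal in `𝒢_{n,m}`: strictly more reliable than every
non-isomorphic member, for every `p ∈ (0,1)`. -/
def UniquelyOptimal (G : Multigraph) (n m : ℕ) : Prop :=
  memG G n m ∧ ∀ H : Multigraph, memG H n m → ¬ IsIso G H →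
    ∀ p : ℝ, 0 < p → p < 1 → H.rel p < G.rel p

noncomputable instance quotFintype {α : Type} [Fintype α] {r : α → α → Prop} :
    Fintype (Quot r) :=
  letI := Classical.decEq (Quot r)
  Fintype.ofSurjective (Quot.mk r) fun q => Quot.exists_rep q

/-- Identification of the endpoints of zero-weight edges. -/
def zeroRel (D : Multigraph) (w : D.E → ℕ) : D.V → D.V → Prop :=
  fun u v => ∃ e : D.E, w e = 0 ∧ D.src e = u ∧ D.tgt e = v

/-- The `j`-th node along the chain replacing the edge `e` (whose chain has `w e` edges). -/
def chainNode (D : Multigraph) (w : D.E → ℕ) (e : D.E) (j : ℕ) :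
    Quot (zeroRel D w) ⊕ (Σ f : D.E, Fin (w f - 1)) :=
  if h : 0 < j ∧ j < w e then Sum.inr ⟨e, ⟨j - 1, by omega⟩⟩
  else if j = 0 then Sum.inl (Quot.mk _ (D.src e))
  else Sum.inl (Quot.mk _ (D.tgt e))

/-- The weak subdivision of `D` determined by the chain lengths `w`: each edge `e` is
replaced by a chain with `w e` edges; zero-weight edges are contracted. -/
def subdivide (D : Multigraph) (w : D.E → ℕ) : Multigraph where
  V := Quot (zeroRel D w) ⊕ (Σ f : D.E, Fin (w f - 1))
  E := Σ f : D.E, Fin (w f)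
  src f := chainNode D w f.1 f.2.val
  tgt f := chainNode D w f.1 (f.2.val + 1)

/-- The zero-weight edges contain no cycle (no "zero cycle"): they form a forest. -/
def ZeroAcyclic (D : Multigraph) (w : D.E → ℕ) : Prop :=
  Fintype.card (Quot (zeroRel D w)) +
      (Finset.univ.filter fun e : D.E => w e = 0).card = Fintype.card D.V

/-- `G` is a weak subdivision of `D` with chain lengths `w`. -/
def IsWeakSubdivision (G D : Multigraph) (w : D.E → ℕ) : Prop :=
  ZeroAcyclic D w ∧ IsIso G (subdivide D w)

/-- `D` is a weak distillation of `G`. -/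
def IsWeakDistillation (D G : Multigraph) : Prop :=
  ∃ w : D.E → ℕ, IsWeakSubdivision G D w

/-- The chain lengths differ pairwise by at most one. -/
def BalancedWeights {E : Type} (w : E → ℕ) : Prop := ∀ e f : E, w e ≤ w f + 1

/-- `D ∈ 𝒟_k`: connected, cubic, 3-edge-connected, of exceedance `k`. -/
def memDk (k : ℕ) (D : Multigraph) : Prop :=
  D.Connected ∧ (∀ v : D.V, D.deg v = 3) ∧
    (∀ F : Finset D.E, D.Disconnects F → 3 ≤ F.card) ∧ D.nE = D.nV + k

/-- Identification of the two endpoints of the edge `e`. -/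
def contractRel (G : Multigraph) (e : G.E) : G.V → G.V → Prop :=
  fun u v => u = G.src e ∧ v = G.tgt e

/-- Contraction of the edge `e`. -/
def Multigraph.contract (G : Multigraph) (e : G.E) : Multigraph :=
  letI := Classical.decEq G.E
  { V := Quot (contractRel G e)
    E := {f : G.E // f ≠ e}
    src := fun f => Quot.mk _ (G.src f.1)
    tgt := fun f => Quot.mk _ (G.tgt f.1) }

/-- `G'` is obtained from `G` by shifting an edge: in an intermediate graph `H`
(the expansion of `G` at a vertex by the new edge `e'`), the edges `e, e'` form a
2-bond; contracting `e'` gives back `G`, while contracting `e` gives `G'`. -/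
def IsShiftOf (G G' : Multigraph) : Prop :=
  ∃ (H : Multigraph) (e e' : H.E), e ≠ e' ∧
    H.src e ≠ H.tgt e ∧ H.src e' ≠ H.tgt e' ∧
    H.IsBond {e, e'} ∧
    IsIso (H.contract e') G ∧ IsIso (H.contract e) G'

/-- Equivalence of graphs: repeated edge shifting. -/
def EquivalentGraphs (G G' : Multigraph) : Prop :=
  Relation.ReflTransGen IsShiftOf G G'

/-- `G'` is obtained from `G` by moving the (non-loop) edge `e`: contracting `e` and
expanding a new edge, identified with `e` via `φ`, at an arbitrary vertex.
Equivalently, `G/e` and `G'/φ e` agree, compatibly with the edge identification `φ`. -/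
def MovedEdge (G G' : Multigraph) (φ : G.E ≃ G'.E) (e : G.E) : Prop :=
  G.src e ≠ G.tgt e ∧ G'.src (φ e) ≠ G'.tgt (φ e) ∧
  ∃ ψ : Quot (contractRel G e) ≃ Quot (contractRel G' (φ e)),
    ∀ f : G.E, f ≠ e →
      ((ψ (Quot.mk _ (G.src f)) = Quot.mk _ (G'.src (φ f)) ∧
        ψ (Quot.mk _ (G.tgt f)) = Quot.mk _ (G'.tgt (φ f))) ∨
       (ψ (Quot.mk _ (G.src f)) = Quot.mk _ (G'.tgt (φ f)) ∧
        ψ (Quot.mk _ (G.tgt f)) = Quot.mk _ (G'.src (φ f))))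

/-- Move one edge from the chain `a` to the chain `b`. -/
def moveWeight {E : Type} (w : E → ℕ) (a b : E) : E → ℕ :=
  fun g => if g = b then w b + 1 else if g = a then w a - 1 else w g

/-- The chains of maximal length. -/
def maxChains (D : Multigraph) (w : D.E → ℕ) : Finset D.E :=
  Finset.univ.filter fun e => ∀ f : D.E, w f ≤ w e

/-- The chains of minimal length. -/
def minChains (D : Multigraph) (w : D.E → ℕ) : Finset D.E :=
  Finset.univ.filter fun e => ∀ f : D.E, w e ≤ w f

/-- Degree of `v` within the edge set `S`. -/
def degIn (D : Multigraph) (S : Finset D.E) (v : D.V) : ℕ :=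
  (S.filter fun e => D.src e = v).card + (S.filter fun e => D.tgt e = v).card

/-- `S` is a matching (pairwise non-adjacent edges). -/
def IsMatchingIn (D : Multigraph) (S : Finset D.E) : Prop := ∀ v : D.V, degIn D S v ≤ 1

/-- `S` is a path with three edges. -/
def IsPath3In (D : Multigraph) (S : Finset D.E) : Prop :=
  S.card = 3 ∧ (∀ v : D.V, degIn D S v ≤ 2) ∧
    (Finset.univ.filter fun v : D.V => degIn D S v = 1).card = 2

/-- `S` is the disjoint union of a path with three edges and a single edge. -/
def IsPath3PlusEdgeIn (D : Multigraph) (S : Finset D.E) : Prop :=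
  S.card = 4 ∧ (∀ v : D.V, degIn D S v ≤ 2) ∧
    (Finset.univ.filter fun v : D.V => degIn D S v = 1).card = 4 ∧
    ∃ e ∈ S, degIn D S (D.src e) = 2 ∧ degIn D S (D.tgt e) = 2

/-- `S` is the disjoint union of two paths with two edges each. -/
def IsTwoPlusTwoIn (D : Multigraph) (S : Finset D.E) : Prop :=
  S.card = 4 ∧ (∀ v : D.V, degIn D S v ≤ 2) ∧
    (Finset.univ.filter fun v : D.V => degIn D S v = 1).card = 4 ∧
    ∀ e ∈ S, degIn D S (D.src e) = 1 ∨ degIn D S (D.tgt e) = 1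

/-- Two edges sharing a vertex. -/
def AdjEdges (D : Multigraph) (a b : D.E) : Prop :=
  ∃ v : D.V, (D.src a = v ∨ D.tgt a = v) ∧ (D.src b = v ∨ D.tgt b = v)

/-- The number of incidences of edges of weight `c` at the vertex `u`. -/
def incCount (D : Multigraph) (w : D.E → ℕ) (u : D.V) (c : ℕ) : ℕ :=
  (Finset.univ.filter fun e : D.E => D.src e = u ∧ w e = c).card +
    (Finset.univ.filter fun e : D.E => D.tgt e = u ∧ w e = c).card

/-- The `π^v`-value of the vertex `u`: the number of incident edges of weight `q + 1`
minus the number of incident edges of weight `q - 1`. -/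
def piV (D : Multigraph) (w : D.E → ℕ) (q : ℕ) (u : D.V) : ℤ :=
  (incCount D w u (q + 1) : ℤ) -
    (if q = 0 then 0 else (incCount D w u (q - 1) : ℤ))

/-- The `π^v`-values are balanced: pairwise differences at most one. -/
def BalancedPiV (D : Multigraph) (w : D.E → ℕ) (q : ℕ) : Prop :=
  ∀ u v : D.V, piV D w q u ≤ piV D w q v + 1

/-- The standard weight `q`, where `m = 3kq + r` with `-3k/2 < r ≤ 3k/2`. -/
def stdWeight (m k : ℕ) : ℕ := (2 * m + 3 * k - 1) / (6 * k)

/-- `w` is a balanced weighting of `D` of total size `m` (the implied weak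
subdivision is the generic member of `ℬ_m(D)`). -/
def IsBalancedWeighting (D : Multigraph) (w : D.E → ℕ) (m : ℕ) : Prop :=
  (∑ e : D.E, w e) = m ∧ BalancedWeights w ∧ ZeroAcyclic D w

/-- Every 3-bond of `D` is trivial (consists of the three edges at a single vertex). -/
def OnlyTrivialThreeBonds (D : Multigraph) : Prop :=
  ∀ F : Finset D.E, D.IsBond F → F.card = 3 →
    ∃ u : D.V, F = Finset.univ.filter fun e => D.src e = u ∨ D.tgt e = u

/-- The 3-dipole: two vertices joined by three parallel edges. -/
def dipole3 : Multigraph where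
  V := Fin 2
  E := Fin 3
  src _ := 0
  tgt _ := 1

/-- The complete graph `K₄`. -/
def K4 : Multigraph where
  V := Fin 4
  E := {p : Fin 4 × Fin 4 // p.1 < p.2}
  src p := p.1.1
  tgt p := p.1.2

/-- The complete bipartite graph `K_{3,3}`. -/
def K33 : Multigraph where
  V := Fin 3 ⊕ Fin 3
  E := Fin 3 × Fin 3
  src p := Sum.inl p.1
  tgt p := Sum.inr p.2

/-- The triangular prism `Π₃`; the edges `Sum.inr i` are the rungs. -/
def prism : Multigraph where
  V := Fin 3 × Bool
  E := (Fin 3 × Bool) ⊕ Fin 3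
  src := fun e => match e with
    | Sum.inl (i, b) => (i, b)
    | Sum.inr i => (i, false)
  tgt := fun e => match e with
    | Sum.inl (i, b) => (i + 1, b)
    | Sum.inr i => (i, true)

/-- The Wagner graph (the 4-Möbius ladder): the edges `Sum.inl i` are the rails
(the 8-cycle) and the edges `Sum.inr j` are the rungs. -/
def wagner : Multigraph where
  V := Fin 8
  E := Fin 8 ⊕ Fin 4
  src := fun e => match e with
    | Sum.inl i => i
    | Sum.inr j => ⟨j.val, by omega⟩
  tgt := fun e => match e with
    | Sum.inl i => i + 1
    | Sum.inr j => ⟨j.val + 4, by omega⟩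

/-- The Petersen graph. -/
def petersen : Multigraph where
  V := Fin 5 × Bool
  E := Fin 5 ⊕ Fin 5 ⊕ Fin 5
  src := fun e => match e with
    | Sum.inl i => (i, false)
    | Sum.inr (Sum.inl i) => (i, false)
    | Sum.inr (Sum.inr i) => (i, true)
  tgt := fun e => match e with
    | Sum.inl i => (i + 1, false)
    | Sum.inr (Sum.inl i) => (i, true)
    | Sum.inr (Sum.inr i) => (i + 2, true)


namespace Multigraph

lemma disc_of_cut_sub (G : Multigraph) (A : Finset G.V) (h1 : A.Nonempty) (h2 : A ≠ Finset.univ)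
    (F : Finset G.E) (hF : G.cutEdges A ⊆ F) : G.Disconnects F := by
  intro hc
  obtain ⟨u, hu⟩ := h1
  obtain ⟨v, hv⟩ : ∃ v, v ∉ A := by
    by_contra! h
    exact h2 (Finset.eq_univ_iff_forall.2 h)
  have key : ∀ x, Relation.ReflTransGen (G.stepOn (Finset.univ \ F)) u x → x ∈ A := by
    intro x hx
    induction hx with
    | refl => exact hu
    | tail _ hs ih =>
      obtain ⟨e, he, h⟩ := hs
      by_contra hn
      have : e ∈ G.cutEdges A := by
        simp only [cutEdges, Finset.mem_filter, Finset.mem_univ, true_and]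
        rcases h with ⟨h, h'⟩ | ⟨h, h'⟩
        · left; rw [h, h']; exact ⟨ih, hn⟩
        · right; rw [h, h']; exact ⟨hn, ih⟩
      simp at he
      exact he (hF this)
  exact hv (key v (hc u v))

lemma cut_of_disc (G : Multigraph) (F : Finset G.E) (h : G.Disconnects F) :
    ∃ A : Finset G.V, A.Nonempty ∧ A ≠ Finset.univ ∧ G.cutEdges A ⊆ F := by
  unfold Disconnects ConnOn at h
  push Not at h
  obtain ⟨u, v, huv⟩ := h
  refine ⟨Finset.univ.filter fun x => Relation.ReflTransGen (G.stepOn (Finset.univ \ F)) u x,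
    ⟨u, by simp [Relation.ReflTransGen.refl]⟩, ?_, ?_⟩
  · intro hh
    have := Finset.mem_univ v
    rw [← hh] at this
    simp at this
    exact huv this
  · intro e he
    by_contra hn
    simp only [cutEdges, Finset.mem_filter, Finset.mem_univ, true_and] at he
    rcases he with ⟨h1, h2⟩ | ⟨h1, h2⟩
    · exact h2 (h1.tail ⟨e, by simp [hn], Or.inl ⟨rfl, rfl⟩⟩)
    · exact h1 (h2.tail ⟨e, by simp [hn], Or.inr ⟨rfl, rfl⟩⟩)

def star (G : Multigraph) (u : G.V) : Finset G.E :=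
  Finset.univ.filter fun e => G.src e = u ∨ G.tgt e = u

end Multigraph

open Multigraph

lemma handshake (G : Multigraph) : ∑ v, G.deg v = 2 * G.nE := by
  unfold Multigraph.deg
  rw [Finset.sum_add_distrib]
  have h1 : Fintype.card G.E = ∑ v, (Finset.univ.filter fun e => G.src e = v).card := by
    have := Finset.card_eq_sum_card_fiberwise (f := G.src) (s := Finset.univ) (t := Finset.univ)
      (by simp)
    simpa using this
  have h2 : Fintype.card G.E = ∑ v, (Finset.univ.filter fun e => G.tgt e = v).card := by
    have := Finset.card_eq_sum_card_fiberwise (f := G.tgt) (s := Finset.univ) (t := Finset.univ)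
      (by simp)
    simpa using this
  rw [← h1, ← h2]; unfold Multigraph.nE; ring

lemma memDk_card {k : ℕ} {D : Multigraph} (hD : memDk k D) :
    Fintype.card D.V = 2 * k ∧ Fintype.card D.E = 3 * k := by
  obtain ⟨_, h3, _, he⟩ := hD
  have := handshake D
  simp only [h3] at this
  simp at this
  unfold Multigraph.nE Multigraph.nV at *
  omega

lemma memDk_noloop {k : ℕ} (hk : 2 ≤ k) {D : Multigraph} (hD : memDk k D) (e : D.E) :
    D.src e ≠ D.tgt e := by
  intro hl
  obtain ⟨hV, hE⟩ := memDk_card hD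
  obtain ⟨_, h3, hc, _⟩ := hD
  have hne : ({D.src e} : Finset D.V) ≠ Finset.univ := by
    intro h
    have := congrArg Finset.card h
    simp [hV] at this
    omega
  have h := hc _ (D.disc_of_cut_sub {D.src e} (by simp) hne _ (Finset.Subset.refl _))
  have hd := h3 (D.src e)
  unfold Multigraph.deg at hd
  have hsub : D.cutEdges {D.src e} ⊆
      ((Finset.univ.filter fun f => D.src f = D.src e).erase e) ∪
      ((Finset.univ.filter fun f => D.tgt f = D.src e).erase e) := by
    intro f hf
    simp only [Multigraph.cutEdges, Finset.mem_filter, Finset.mem_univ, true_and,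
      Finset.mem_singleton] at hf
    have : f ≠ e := by
      rintro rfl
      rw [← hl] at hf
      tauto
    simp only [Finset.mem_union, Finset.mem_erase, Finset.mem_filter, Finset.mem_univ, true_and]
    tauto
  have h4 := (Finset.card_le_card hsub).trans (Finset.card_union_le _ _)
  rw [Finset.card_erase_of_mem (by simp), Finset.card_erase_of_mem (by simp [hl])] at h4
  omega

lemma inc_eq (D : Multigraph) (hl : ∀ e, D.src e ≠ D.tgt e) (u : D.V) (p : D.E → Prop) :
    (Finset.univ.filter fun e : D.E => D.src e = u ∧ p e).card +
    (Finset.univ.filter fun e : D.E => D.tgt e = u ∧ p e).card = ((D.star u).filter p).card := by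
  rw [← Finset.card_union_of_disjoint]
  · congr 1
    ext e
    simp [Multigraph.star]
    tauto
  · rw [Finset.disjoint_left]
    intro e h1 h2
    simp at h1 h2
    exact hl e (h1.1.trans h2.1.symm)

lemma star_card' (D : Multigraph) (hl : ∀ e, D.src e ≠ D.tgt e) (u : D.V) :
    (D.star u).card = D.deg u := by
  have := inc_eq D hl u (fun _ => True)
  simp only [and_true, Finset.filter_true] at this
  rw [← this]; rfl

lemma star_eq_cut (D : Multigraph) (hl : ∀ e, D.src e ≠ D.tgt e) (u : D.V) :
    D.cutEdges {u} = D.star u := by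
  ext e
  have := hl e
  simp only [Multigraph.cutEdges, Multigraph.star, Finset.mem_filter, Finset.mem_univ, true_and,
      Finset.mem_singleton]
  constructor
  · tauto
  · rintro (h | h)
    · left; refine ⟨h, fun h' => this (h.trans h'.symm)⟩
    · right; refine ⟨fun h' => this (h'.trans h.symm), h⟩

lemma star_disc {k : ℕ} (hk : 2 ≤ k) {D : Multigraph} (hD : memDk k D) (u : D.V) :
    D.Disconnects (D.star u) := by
  refine D.disc_of_cut_sub {u} (by simp) ?_ _ (by rw [star_eq_cut D (memDk_noloop hk hD)])
  intro h
  have := congrArg Finset.card h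
  simp [(memDk_card hD).1] at this
  omega

lemma mgstar_inj {k : ℕ} (hk : 2 ≤ k) {D : Multigraph} (hD : memDk k D) :
    Function.Injective D.star := by
  intro u v huv
  by_contra hne
  have hne' : ({u, v} : Finset D.V) ≠ Finset.univ := by
    intro h
    have := congrArg Finset.card h
    rw [Finset.card_pair hne, Finset.card_univ, (memDk_card hD).1] at this
    omega
  have h := hD.2.2.1 _ (D.disc_of_cut_sub {u, v} (by simp) hne' _ (Finset.Subset.refl _))
  have hl := memDk_noloop hk hD
  have : D.cutEdges {u, v} = ∅ := by
    rw [Finset.eq_empty_iff_forall_notMem]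
    intro e he
    have h1 : e ∈ D.star u ↔ e ∈ D.star v := by rw [huv]
    have := hl e
    simp only [Multigraph.cutEdges, Multigraph.star, Finset.mem_filter, Finset.mem_univ, true_and,
      Finset.mem_singleton, Finset.mem_insert] at he h1
    grind
  rw [this] at h
  simp at h

lemma disc3_iff_bond {k : ℕ} {D : Multigraph} (hD : memDk k D) (F : Finset D.E)
    (hF : F.card = 3) : D.Disconnects F ↔ D.IsBond F := by
  constructor
  · intro h
    obtain ⟨A, h1, h2, h3⟩ := D.cut_of_disc F h
    have h4 := hD.2.2.1 _ (D.disc_of_cut_sub A h1 h2 _ (Finset.Subset.refl _))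
    have h5 := Finset.eq_of_subset_of_card_le h3 (by omega)
    refine ⟨⟨A, h1, h2, h5.symm⟩, ?_⟩
    rintro F' hF' ⟨B, b1, b2, rfl⟩
    have h6 := hD.2.2.1 _ (D.disc_of_cut_sub B b1 b2 _ (Finset.Subset.refl _))
    exact Finset.eq_of_subset_of_card_le hF' (by omega)
  · rintro ⟨⟨A, h1, h2, rfl⟩, _⟩
    exact D.disc_of_cut_sub A h1 h2 _ (Finset.Subset.refl _)

/-- The sum over 3-disconnections of the products of weights. -/
def P3 (D : Multigraph) (w : D.E → ℕ) : ℕ :=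
  ∑ F ∈ (Finset.univ : Finset (Finset D.E)).filter fun F => F.card = 3 ∧ D.Disconnects F,
    ∏ e ∈ F, w e

def S3 (D : Multigraph) (w : D.E → ℕ) : ℕ := ∑ u, ∏ e ∈ D.star u, w e

lemma P3_ge {k : ℕ} (hk : 2 ≤ k) {D : Multigraph} (hD : memDk k D) (w : D.E → ℕ)
    (hw : ∀ e, 0 < w e) :
    S3 D w ≤ P3 D w ∧ (P3 D w = S3 D w ↔ OnlyTrivialThreeBonds D) := by
  have hS : S3 D w = ∑ F ∈ Finset.univ.image D.star, ∏ e ∈ F, w e := by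
    rw [Finset.sum_image (fun a _ b _ h => mgstar_inj hk hD h)]; rfl
  have hsub : Finset.univ.image D.star ⊆
      (Finset.univ : Finset (Finset D.E)).filter fun F => F.card = 3 ∧ D.Disconnects F := by
    intro F hF
    simp only [Finset.mem_image, Finset.mem_univ, true_and] at hF
    obtain ⟨u, rfl⟩ := hF
    simp only [Finset.mem_filter, Finset.mem_univ, true_and]
    refine ⟨?_, star_disc hk hD u⟩
    rw [star_card' D (memDk_noloop hk hD), hD.2.1]
  have hd := Finset.sum_sdiff (f := fun F => ∏ e ∈ F, w e) hsub
  rw [← hS] at hd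
  change _ = P3 D w at hd
  refine ⟨by omega, ?_⟩
  have h0 : P3 D w = S3 D w ↔ ∑ F ∈ ((Finset.univ : Finset (Finset D.E)).filter
      fun F => F.card = 3 ∧ D.Disconnects F) \ Finset.univ.image D.star, ∏ e ∈ F, w e = 0 := by
    omega
  rw [h0, Finset.sum_eq_zero_iff]
  constructor
  · intro h F hF hc
    by_contra hn
    have := h F (by
      simp only [Finset.mem_sdiff, Finset.mem_filter, Finset.mem_univ, true_and,
        Finset.mem_image]
      refine ⟨⟨hc, (disc3_iff_bond hD F hc).2 hF⟩, ?_⟩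
      rintro ⟨u, rfl⟩
      exact hn ⟨u, rfl⟩)
    rw [Finset.prod_eq_zero_iff] at this
    obtain ⟨e, _, he⟩ := this
    have := hw e
    omega
  · intro h F hF
    simp only [Finset.mem_sdiff, Finset.mem_filter, Finset.mem_univ, true_and,
        Finset.mem_image] at hF
    obtain ⟨⟨hc, hd⟩, hn⟩ := hF
    obtain ⟨u, hu⟩ := h F ((disc3_iff_bond hD F hc).1 hd) hc
    exact absurd ⟨u, hu.symm⟩ hn

open Multigraph

lemma bal_two {ι : Type} [Fintype ι] [Nonempty ι] (w : ι → ℕ) (hb : ∀ e f, w e ≤ w f + 1) (a : ℕ)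
    (h1 : a * Fintype.card ι ≤ ∑ e, w e) (h2 : ∑ e, w e < (a + 1) * Fintype.card ι) (e : ι) :
    w e = a ∨ w e = a + 1 := by
  have hlo : a ≤ w e := by
    by_contra! h
    have : ∑ f, w f < ∑ _f : ι, a :=
      Finset.sum_lt_sum (fun f _ => by have := hb f e; omega) ⟨e, by simp, h⟩
    simp at this
    nlinarith
  have hhi : w e ≤ a + 1 := by
    by_contra! h
    have : ∑ _f : ι, (a + 1) < ∑ f, w f :=
      Finset.sum_lt_sum (fun f _ => by have := hb e f; omega) ⟨e, by simp, h⟩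
    simp at this
    nlinarith
  omega

lemma two_sum {ι : Type} (s : Finset ι) (w : ι → ℕ) (a : ℕ)
    (h : ∀ e ∈ s, w e = a ∨ w e = a + 1) :
    ∑ e ∈ s, w e = a * s.card + (s.filter fun e => w e = a + 1).card := by
  rw [Finset.card_filter]
  have : ∀ e ∈ s, w e = a + if w e = a + 1 then 1 else 0 := by
    intro e he
    rcases h e he with h | h <;> simp [h]
  rw [Finset.sum_congr rfl this, Finset.sum_add_distrib]
  simp [mul_comm]

lemma two_prod {ι : Type} (s : Finset ι) (w : ι → ℕ) (a : ℕ)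
    (h : ∀ e ∈ s, w e = a ∨ w e = a + 1) :
    ∏ e ∈ s, w e = a ^ (s.filter fun e => w e = a).card *
      (a + 1) ^ (s.filter fun e => w e = a + 1).card := by
  rw [Finset.card_filter, Finset.card_filter, ← Finset.prod_pow_eq_pow_sum,
    ← Finset.prod_pow_eq_pow_sum, ← Finset.prod_mul_distrib]
  refine Finset.prod_congr rfl ?_
  intro e he
  rcases h e he with h | h <;> simp [h]

lemma two_card {ι : Type} (s : Finset ι) (w : ι → ℕ) (a : ℕ)
    (h : ∀ e ∈ s, w e = a ∨ w e = a + 1) :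
    (s.filter fun e => w e = a).card + (s.filter fun e => w e = a + 1).card = s.card := by
  rw [← Finset.card_filter_add_card_filter_not (s := s) (fun e => w e = a)]
  congr 2
  refine Finset.filter_congr ?_
  intro e he
  rcases h e he with h | h <;> omega

/-- cubic product with `s` heavy edges. -/
def fc (a s : ℕ) : ℤ := (a : ℤ) ^ (3 - s) * ((a : ℤ) + 1) ^ s

lemma fc_convex (a c s : ℕ) (ha : 1 ≤ a) (hc : c ≤ 2) (hs : s ≤ 3) :
    fc a c + (fc a (c + 1) - fc a c) * ((s : ℤ) - c) ≤ fc a s ∧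
    (fc a s = fc a c + (fc a (c + 1) - fc a c) * ((s : ℤ) - c) ↔ s = c ∨ s = c + 1) := by
  have ha' : (1 : ℤ) ≤ a := by exact_mod_cast ha
  interval_cases c <;> interval_cases s <;> simp [fc] <;> ring_nf <;> 
    first
    | nlinarith
    | (constructor
       · nlinarith
       · intro h; nlinarith)

lemma sum_convex {V : Type} [Fintype V] [Nonempty V] (s : V → ℕ) (hs : ∀ v, s v ≤ 3) (a c : ℕ)
    (ha : 1 ≤ a) (hc : c ≤ 2)
    (h1 : c * Fintype.card V ≤ ∑ v, s v) (h2 : ∑ v, s v < (c + 1) * Fintype.card V) :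
    fc a c * Fintype.card V + (fc a (c + 1) - fc a c) * ((∑ v, (s v : ℤ)) - c * Fintype.card V)
      ≤ ∑ v, fc a (s v) ∧
    (∑ v, fc a (s v) = fc a c * Fintype.card V +
        (fc a (c + 1) - fc a c) * ((∑ v, (s v : ℤ)) - c * Fintype.card V) ↔
      ∀ u v, s u ≤ s v + 1) := by
  have hL : fc a c * Fintype.card V +
      (fc a (c + 1) - fc a c) * ((∑ v, (s v : ℤ)) - c * Fintype.card V) =
      ∑ v, (fc a c + (fc a (c + 1) - fc a c) * ((s v : ℤ) - c)) := by
    rw [Finset.sum_add_distrib, ← Finset.mul_sum, Finset.sum_sub_distrib]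
    simp
    ring
  rw [hL]
  refine ⟨Finset.sum_le_sum fun v _ => (fc_convex a c (s v) ha hc (hs v)).1, ?_⟩
  rw [eq_comm, Finset.sum_eq_sum_iff_of_le fun v _ => (fc_convex a c (s v) ha hc (hs v)).1]
  constructor
  · intro h u v
    have hu := (fc_convex a c (s u) ha hc (hs u)).2.1 (h u (by simp)).symm
    have hv := (fc_convex a c (s v) ha hc (hs v)).2.1 (h v (by simp)).symm
    omega
  · intro h v _
    exact ((fc_convex a c (s v) ha hc (hs v)).2.2 (bal_two s h c h1 h2 v)).symm

/-- number of heavy edges at `u`. -/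
def hv (D : Multigraph) (w : D.E → ℕ) (a : ℕ) (u : D.V) : ℕ :=
  ((D.star u).filter fun e => w e = a + 1).card

lemma sum_hv (D : Multigraph) (hl : ∀ e, D.src e ≠ D.tgt e) (w : D.E → ℕ) (a : ℕ) :
    ∑ u, hv D w a u = 2 * (Finset.univ.filter fun e => w e = a + 1).card := by
  have h0 : ∀ u, hv D w a u = (Finset.univ.filter fun e : D.E => D.src e = u ∧ w e = a + 1).card +
    (Finset.univ.filter fun e : D.E => D.tgt e = u ∧ w e = a + 1).card := by
    intro u
    unfold hv
    convert (inc_eq D hl u (fun e => w e = a + 1)).symm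
  simp_rw [h0]
  rw [Finset.sum_add_distrib]
  have h1 : ∀ f : D.E → D.V, (Finset.univ.filter fun e => w e = a + 1).card =
      ∑ u, (Finset.univ.filter fun e => f e = u ∧ w e = a + 1).card := by
    intro f
    have := Finset.card_eq_sum_card_fiberwise (f := f)
      (s := Finset.univ.filter fun e => w e = a + 1) (t := Finset.univ) (by simp)
    rw [this]
    refine Finset.sum_congr rfl fun u _ => ?_
    rw [Finset.filter_filter]
    congr 1
    ext e
    simp [and_comm]
  rw [← h1 D.src, ← h1 D.tgt]
  ring

lemma piV_eq {k m : ℕ} (hk : 2 ≤ k) (hm : 3 * k ≤ m) {D : Multigraph} (hD : memDk k D)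
    (w : D.E → ℕ) (hw : ∀ e, w e = m / (3 * k) ∨ w e = m / (3 * k) + 1) :
    BalancedPiV D w (stdWeight m k) ↔
      ∀ u v, hv D w (m / (3 * k)) u ≤ hv D w (m / (3 * k)) v + 1 := by
  have hl := memDk_noloop hk hD
  set a := m / (3 * k) with ha
  have ha1 : 1 ≤ a := by
    rw [ha, Nat.le_div_iff_mul_le (by omega)]; omega
  have hinc : ∀ u c, incCount D w u c = ((D.star u).filter fun e => w e = c).card := by
    intro u c
    unfold incCount
    convert inc_eq D hl u (fun e => w e = c)
  have hmod : m = 3 * k * a + m % (3 * k) := (Nat.div_add_mod m (3 * k)).symm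
  have hlt : m % (3 * k) < 3 * k := Nat.mod_lt _ (by omega)
  generalize m % (3 * k) = b at hmod hlt
  have hq : stdWeight m k = a ∨ stdWeight m k = a + 1 := by
    unfold stdWeight
    have h1 : a ≤ (2 * m + 3 * k - 1) / (6 * k) := by
      rw [Nat.le_div_iff_mul_le (by omega)]
      have : a * (6 * k) = 2 * (3 * k * a) := by ring
      omega
    have h2 : (2 * m + 3 * k - 1) / (6 * k) < a + 2 := by
      rw [Nat.div_lt_iff_lt_mul (by omega)]
      have : (a + 2) * (6 * k) = 2 * (3 * k * a) + 12 * k := by ring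
      omega
    omega
  unfold BalancedPiV
  rcases hq with hq | hq
  · have : ∀ u, piV D w (stdWeight m k) u = hv D w a u := by
      intro u
      unfold piV
      rw [hq, if_neg (by omega), hinc, hinc]
      have : (D.star u).filter (fun e => w e = a - 1) = ∅ := by
        rw [Finset.filter_eq_empty_iff]
        intro e _
        have := hw e
        omega
      rw [this]
      simp [hv]
    simp_rw [this]
    norm_cast
  · have : ∀ u, piV D w (stdWeight m k) u = hv D w a u - 3 := by
      intro u
      unfold piV
      rw [hq, if_neg (by omega), hinc, hinc]
      have : (D.star u).filter (fun e => w e = a + 1 + 1) = ∅ := by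
        rw [Finset.filter_eq_empty_iff]
        intro e _
        have := hw e
        omega
      rw [this]
      have h3 := two_card (D.star u) w a (fun e _ => hw e)
      rw [star_card' D hl, hD.2.1] at h3
      simp only [hv, Finset.card_empty, Nat.add_sub_cancel]
      omega
    simp_rw [this]
    constructor <;> intro h u v <;> have := h u v <;> omega

/-- The lower bound. -/
def Lb (k m : ℕ) : ℤ :=
  fc (m / (3 * k)) (m % (3 * k) / k) * (2 * k : ℕ) +
    (fc (m / (3 * k)) (m % (3 * k) / k + 1) - fc (m / (3 * k)) (m % (3 * k) / k)) *
    ((2 * (m % (3 * k)) : ℕ) - (m % (3 * k) / k : ℕ) * (2 * k : ℕ))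

lemma weights_two {k m : ℕ} (hk : 2 ≤ k) {D : Multigraph} (hD : memDk k D)
    (w : D.E → ℕ) (hw : IsBalancedWeighting D w m) :
    (∀ e, w e = m / (3 * k) ∨ w e = m / (3 * k) + 1) ∧
    (Finset.univ.filter fun e => w e = m / (3 * k) + 1).card = m % (3 * k) := by
  obtain ⟨hV, hE⟩ := memDk_card hD
  have : Nonempty D.E := Fintype.card_pos_iff.1 (by omega)
  have hmod : 3 * k * (m / (3 * k)) + m % (3 * k) = m := Nat.div_add_mod m (3 * k)
  have hlt : m % (3 * k) < 3 * k := Nat.mod_lt _ (by omega)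
  have h1 : ∀ e, w e = m / (3 * k) ∨ w e = m / (3 * k) + 1 := by
    refine bal_two w hw.2.1 _ ?_ ?_ <;> rw [hw.1, hE] <;> nlinarith [Nat.zero_le (m % (3 * k))]
  refine ⟨h1, ?_⟩
  have := two_sum Finset.univ w _ (fun e _ => h1 e)
  rw [hw.1, Finset.card_univ, hE] at this
  nlinarith

lemma S3_ge {k m : ℕ} (hk : 2 ≤ k) (hm : 3 * k ≤ m) {D : Multigraph} (hD : memDk k D)
    (w : D.E → ℕ) (hw : IsBalancedWeighting D w m) :
    Lb k m ≤ (S3 D w : ℤ) ∧ ((S3 D w : ℤ) = Lb k m ↔ BalancedPiV D w (stdWeight m k)) := by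
  obtain ⟨hV, hE⟩ := memDk_card hD
  have hl := memDk_noloop hk hD
  obtain ⟨h1, h2⟩ := weights_two hk hD w hw
  rw [piV_eq hk hm hD w h1]
  have hlt : m % (3 * k) < 3 * k := Nat.mod_lt _ (by omega)
  have hsum := sum_hv D hl w (m / (3 * k))
  rw [h2] at hsum
  have : Nonempty D.V := Fintype.card_pos_iff.1 (by omega)
  have hs3 : ∀ u, hv D w (m / (3 * k)) u ≤ 3 := by
    intro u
    rw [← hD.2.1 u, ← star_card' D hl]
    exact Finset.card_filter_le _ _
  have hS : (S3 D w : ℤ) = ∑ u, fc (m / (3 * k)) (hv D w (m / (3 * k)) u) := by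
    unfold S3
    push_cast
    refine Finset.sum_congr rfl fun u _ => ?_
    have h3 := two_prod (D.star u) w _ (fun e _ => h1 e)
    have h4 := two_card (D.star u) w _ (fun e _ => h1 e)
    rw [star_card' D hl, hD.2.1] at h4
    unfold fc hv
    rw [show 3 - ((D.star u).filter fun e => w e = m / (3 * k) + 1).card =
      ((D.star u).filter fun e => w e = m / (3 * k)).card by omega]
    have h5 := congrArg (Nat.cast : ℕ → ℤ) h3
    push_cast at h5
    exact h5
  have hd : k * (m % (3 * k) / k) + m % (3 * k) % k = m % (3 * k) := Nat.div_add_mod _ _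
  have hd' : m % (3 * k) % k < k := Nat.mod_lt _ (by omega)
  have key := sum_convex (hv D w (m / (3 * k))) hs3 (m / (3 * k)) (m % (3 * k) / k)
    (by rw [Nat.le_div_iff_mul_le (by omega)]; omega)
    (by
      have : m % (3 * k) / k < 3 := by rw [Nat.div_lt_iff_lt_mul (by omega)]; exact hlt
      omega)
    (by rw [hsum, hV]; nlinarith [Nat.zero_le (m % (3 * k) % k)]) (by rw [hsum, hV]; nlinarith)
  rw [hS]
  have hsum' : ∑ v, (hv D w (m / (3 * k)) v : ℤ) = ((2 * (m % (3 * k)) : ℕ) : ℤ) := by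
    rw [← hsum]; push_cast; rfl
  rw [hsum', hV] at key
  exact key

open Multigraph

lemma chainNode_zero (D : Multigraph) (w : D.E → ℕ) (e : D.E) :
    chainNode D w e 0 = Sum.inl (Quot.mk _ (D.src e)) := by
  simp [chainNode]

lemma chainNode_end (D : Multigraph) (w : D.E → ℕ) (hw : ∀ e, 0 < w e) (e : D.E) (j : ℕ)
    (hj : j = w e) : chainNode D w e j = Sum.inl (Quot.mk _ (D.tgt e)) := by
  have := hw e
  unfold chainNode
  rw [dif_neg (by omega), if_neg (by omega)]

lemma chainNode_mid (D : Multigraph) (w : D.E → ℕ) (e : D.E) (j : ℕ) (h : 0 < j ∧ j < w e) :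
    chainNode D w e j = Sum.inr ⟨e, ⟨j - 1, by omega⟩⟩ := by
  unfold chainNode
  rw [dif_pos h]

lemma conn_down (D : Multigraph) (w : D.E → ℕ) (hw : ∀ e, 0 < w e)
    (F : Finset (Σ e : D.E, Fin (w e)))
    (h : (subdivide D w).ConnOn (Finset.univ \ F)) : D.ConnOn (Finset.univ \ F.image Sigma.fst) := by
  let c : D.E → ℕ → D.V := fun e j =>
    if ∃ i : Fin (w e), (⟨e, i⟩ : Σ e : D.E, Fin (w e)) ∈ F ∧ i.val < j then D.tgt e else D.src e
  let φ : Quot (zeroRel D w) ⊕ (Σ f : D.E, Fin (w f - 1)) → D.V := fun x =>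
    match x with
    | Sum.inl q => Quot.lift (fun v => v) (by
        rintro a b ⟨e, he, _⟩
        have := hw e
        omega) q
    | Sum.inr ⟨e, t⟩ => c e (t.val + 1)
  have hφ1 : ∀ e j, j < w e → φ (chainNode D w e j) = c e j := by
    intro e j hj
    rcases Nat.eq_zero_or_pos j with rfl | hp
    · rw [chainNode_zero]; simp [φ, c]
    · rw [chainNode_mid D w e j ⟨hp, hj⟩]
      simp only [φ]
      rw [Nat.sub_add_cancel hp]
  have hφ2 : ∀ e j, j = w e → φ (chainNode D w e j) = D.tgt e := by
    intro e j hj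
    rw [chainNode_end D w hw e j hj]
  have hstep : ∀ x : Σ e : D.E, Fin (w e), x ∉ F →
      φ (chainNode D w x.1 x.2.val) = φ (chainNode D w x.1 (x.2.val + 1)) ∨
      (x.1 ∉ F.image Sigma.fst ∧ φ (chainNode D w x.1 x.2.val) = D.src x.1 ∧
        φ (chainNode D w x.1 (x.2.val + 1)) = D.tgt x.1) := by
    rintro ⟨e, i⟩ hx
    simp only
    by_cases hi : i.val + 1 < w e
    · left
      rw [hφ1 _ _ (by omega), hφ1 _ _ hi]
      simp only [c]
      have : (∃ i' : Fin (w e), (⟨e, i'⟩ : Σ e : D.E, Fin (w e)) ∈ F ∧ i'.val < i.val) ↔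
          (∃ i' : Fin (w e), (⟨e, i'⟩ : Σ e : D.E, Fin (w e)) ∈ F ∧ i'.val < i.val + 1) := by
        constructor
        · rintro ⟨i', h1, h2⟩; exact ⟨i', h1, by omega⟩
        · rintro ⟨i', h1, h2⟩
          refine ⟨i', h1, ?_⟩
          by_contra hh
          have : i' = i := Fin.ext (by omega)
          rw [this] at h1
          exact hx h1
      simp only [this]
    · have hi' : i.val + 1 = w e := by omega
      rw [hφ1 _ _ (by omega), hφ2 _ _ hi']
      by_cases hh : ∃ i' : Fin (w e), (⟨e, i'⟩ : Σ e : D.E, Fin (w e)) ∈ F ∧ i'.val < i.val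
      · left; simp only [c]; rw [if_pos hh]
      · right
        refine ⟨?_, ?_, rfl⟩
        · simp only [Finset.mem_image, not_exists, not_and]
          rintro ⟨e', i'⟩ hm rfl
          apply hh
          refine ⟨i', hm, ?_⟩
          by_contra h3
          have : i' = i := Fin.ext (by omega)
          rw [this] at hm
          exact hx hm
        · simp only [c]; rw [if_neg hh]
  have key : ∀ x y : (subdivide D w).V,
      Relation.ReflTransGen ((subdivide D w).stepOn (Finset.univ \ F)) x y →
      Relation.ReflTransGen (D.stepOn (Finset.univ \ F.image Sigma.fst)) (φ x) (φ y) := by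
    intro x y hxy
    induction hxy with
    | refl => exact Relation.ReflTransGen.refl
    | tail _ hs ih =>
      refine ih.trans ?_
      obtain ⟨e, he, h⟩ := hs
      have he' : e ∉ F := (Finset.mem_sdiff.1 he).2
      have h5 := hstep e he'
      change (chainNode D w e.1 e.2.val = _ ∧ chainNode D w e.1 (e.2.val + 1) = _) ∨
        (chainNode D w e.1 e.2.val = _ ∧ chainNode D w e.1 (e.2.val + 1) = _) at h
      rcases h with ⟨h1, h2⟩ | ⟨h1, h2⟩
      · rw [h1, h2] at h5
        rcases h5 with h5 | ⟨h5, h6, h7⟩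
        · rw [h5]
        · exact Relation.ReflTransGen.single ⟨e.1, by simpa using h5, Or.inl ⟨h6.symm, h7.symm⟩⟩
      · rw [h1, h2] at h5
        rcases h5 with h5 | ⟨h5, h6, h7⟩
        · rw [h5]
        · exact Relation.ReflTransGen.single ⟨e.1, by simpa using h5, Or.inr ⟨h6.symm, h7.symm⟩⟩
  intro u v
  exact key _ _ (h (Sum.inl (Quot.mk _ u)) (Sum.inl (Quot.mk _ v)))

lemma disc_double (D : Multigraph) (w : D.E → ℕ) (hw : ∀ e, 0 < w e)
    (F : Finset (Σ e : D.E, Fin (w e))) (e : D.E) (i j : Fin (w e)) (hij : i.val < j.val)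
    (hi : (⟨e, i⟩ : Σ e : D.E, Fin (w e)) ∈ F) (hj : (⟨e, j⟩ : Σ e : D.E, Fin (w e)) ∈ F) :
    (subdivide D w).Disconnects F := by
  let p : Quot (zeroRel D w) ⊕ (Σ f : D.E, Fin (w f - 1)) → Prop := fun x =>
    match x with
    | Sum.inl _ => False
    | Sum.inr ⟨f, t⟩ => f = e ∧ i.val ≤ t.val ∧ t.val < j.val
  have hp : ∀ f t, t ≤ w f → (p (chainNode D w f t) ↔ f = e ∧ i.val < t ∧ t ≤ j.val) := by
    intro f t ht
    have hjl := j.isLt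
    rcases Nat.eq_zero_or_pos t with rfl | h0
    · rw [chainNode_zero]; simp [p]
    · rcases Nat.lt_or_ge t (w f) with h1 | h1
      · rw [chainNode_mid D w f t ⟨h0, h1⟩]
        simp only [p]
        constructor
        · rintro ⟨h, h2, h3⟩; exact ⟨h, by omega, by omega⟩
        · rintro ⟨h, h2, h3⟩; exact ⟨h, by omega, by omega⟩
      · rw [chainNode_end D w hw f t (by omega)]
        simp only [p, false_iff]
        rintro ⟨rfl, h2, h3⟩
        omega
  let A : Finset (subdivide D w).V := (Finset.univ : Finset (subdivide D w).V).filter p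
  have hA : ∀ x, x ∈ A ↔ p x := fun x =>
    Finset.mem_filter.trans (and_iff_right (Finset.mem_univ _))
  refine (subdivide D w).disc_of_cut_sub A ?_ ?_ F ?_
  · exact ⟨chainNode D w e j.val,
      (hA _).2 ((hp e j.val j.isLt.le).2 ⟨rfl, hij, le_refl _⟩)⟩
  · intro h
    have h1 : (Sum.inl (Quot.mk _ (D.src e)) : (subdivide D w).V) ∈ A := by
      rw [h]; exact Finset.mem_univ _
    exact (hA _).1 h1
  · rintro ⟨f, t⟩ hf
    have hf1 := (Finset.mem_filter.1 hf).2
    have s1 := (hA ((subdivide D w).src ⟨f, t⟩)).trans (hp f t.val t.isLt.le)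
    have s2 := (hA ((subdivide D w).tgt ⟨f, t⟩)).trans (hp f (t.val + 1) t.isLt)
    have hf2 := (or_congr (and_congr s1 (not_congr s2)) (and_congr (not_congr s1) s2)).1 hf1
    have hfe : f = e := by tauto
    subst hfe
    have : t = i ∨ t = j := by
      rcases hf2 with h | h
      · right; apply Fin.ext; simp at h; omega
      · left; apply Fin.ext; simp at h; omega
    rcases this with rfl | rfl
    · exact hi
    · exact hj

lemma conn_up (D : Multigraph) (w : D.E → ℕ) (hw : ∀ e, 0 < w e)
    (F : Finset (Σ e : D.E, Fin (w e)))
    (hinj : ∀ e : D.E, ∀ i j : Fin (w e), (⟨e, i⟩ : Σ e : D.E, Fin (w e)) ∈ F →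
      (⟨e, j⟩ : Σ e : D.E, Fin (w e)) ∈ F → i = j)
    (h : D.ConnOn (Finset.univ \ F.image Sigma.fst)) :
    (subdivide D w).ConnOn (Finset.univ \ F) := by
  have hsy : ∀ {x y}, Relation.ReflTransGen ((subdivide D w).stepOn (Finset.univ \ F)) x y →
      Relation.ReflTransGen ((subdivide D w).stepOn (Finset.univ \ F)) y x := by
    intro x y h
    induction h with
    | refl => exact Relation.ReflTransGen.refl
    | tail _ hs ih =>
      obtain ⟨e, he, h⟩ := hs
      exact Relation.ReflTransGen.head ⟨e, he, h.symm⟩ ih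
  have hrun : ∀ e a n, a + n ≤ w e →
      (∀ i : Fin (w e), a ≤ i.val → i.val < a + n → (⟨e, i⟩ : Σ e : D.E, Fin (w e)) ∉ F) →
      Relation.ReflTransGen ((subdivide D w).stepOn (Finset.univ \ F))
        (chainNode D w e a) (chainNode D w e (a + n)) := by
    intro e a n
    induction n with
    | zero => intro _ _; exact Relation.ReflTransGen.refl
    | succ n ih =>
      intro h1 h2
      refine (ih (by omega) (fun i h3 h4 => h2 i h3 (by omega))).tail ?_
      refine ⟨(⟨e, ⟨a + n, by omega⟩⟩ : Σ e : D.E, Fin (w e)), ?_, Or.inl ⟨rfl, rfl⟩⟩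
      exact Finset.mem_sdiff.2 ⟨Finset.mem_univ _, h2 ⟨a + n, by omega⟩ (by simp) (by simp)⟩
  have hbase : ∀ u v : D.V, Relation.ReflTransGen ((subdivide D w).stepOn (Finset.univ \ F))
      (Sum.inl (Quot.mk _ u)) (Sum.inl (Quot.mk _ v)) := by
    intro u v
    have huv := h u v
    induction huv with
    | refl => exact Relation.ReflTransGen.refl
    | tail _ hs ih =>
      refine Relation.ReflTransGen.trans ih ?_
      obtain ⟨e, he, h⟩ := hs
      have he' : ∀ i : Fin (w e), (⟨e, i⟩ : Σ e : D.E, Fin (w e)) ∉ F := by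
        intro i hi
        rw [Finset.mem_sdiff] at he
        exact he.2 (Finset.mem_image.2 ⟨_, hi, rfl⟩)
      have h1 := hrun e 0 (w e) (by omega) (fun i _ _ => he' i)
      rw [chainNode_zero, chainNode_end D w hw e _ (by omega)] at h1
      rcases h with ⟨rfl, rfl⟩ | ⟨rfl, rfl⟩
      · exact h1
      · exact hsy h1
  have hto : ∀ x : (subdivide D w).V, ∃ u : D.V,
      Relation.ReflTransGen ((subdivide D w).stepOn (Finset.univ \ F)) x
        (Sum.inl (Quot.mk _ u)) := by
    rintro (q | ⟨e, t⟩)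
    · obtain ⟨u, rfl⟩ := Quot.exists_rep q
      exact ⟨u, Relation.ReflTransGen.refl⟩
    · have ht := t.isLt
      have hx : (Sum.inr ⟨e, t⟩ : (subdivide D w).V) = chainNode D w e (t.val + 1) := by
        rw [chainNode_mid D w e (t.val + 1) ⟨by omega, by omega⟩]
        rfl
      rw [hx]
      by_cases hh : ∃ i : Fin (w e), (⟨e, i⟩ : Σ e : D.E, Fin (w e)) ∈ F ∧ i.val < t.val + 1
      · obtain ⟨i, hi, hi'⟩ := hh
        refine ⟨D.tgt e, ?_⟩
        have h1 := hrun e (t.val + 1) (w e - (t.val + 1)) (by omega) (by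
          intro j h2 h3 h4
          have := hinj e i j hi h4
          omega)
        rwa [chainNode_end D w hw e (t.val + 1 + _) (by omega)] at h1
      · refine ⟨D.src e, hsy ?_⟩
        have h1 := hrun e 0 (t.val + 1) (by omega) (by
          intro j h2 h3 h4
          exact hh ⟨j, h4, by omega⟩)
        rw [chainNode_zero] at h1
        simpa using h1
  intro x y
  obtain ⟨u, hu⟩ := hto x
  obtain ⟨v, hv⟩ := hto y
  exact hu.trans ((hbase u v).trans (hsy hv))

lemma conn_iff (D : Multigraph) (w : D.E → ℕ) (hw : ∀ e, 0 < w e)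
    (F : Finset (Σ e : D.E, Fin (w e))) :
    ¬ (subdivide D w).Disconnects F ↔
      (F.image Sigma.fst).card = F.card ∧ ¬ D.Disconnects (F.image Sigma.fst) := by
  rw [Finset.card_image_iff]
  constructor
  · intro h
    constructor
    · rintro ⟨e, i⟩ hi ⟨e', j⟩ hj hee
      simp only at hee
      subst hee
      by_contra hne
      have hne' : i.val ≠ j.val := by
        intro h
        exact hne (by rw [Fin.ext h])
      rcases Nat.lt_or_gt_of_ne hne' with hlt | hlt
      · exact h (disc_double D w hw F e i j hlt hi hj)
      · exact h (disc_double D w hw F e j i hlt hj hi)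
    · unfold Multigraph.Disconnects at *
      push Not at *
      exact conn_down D w hw F h
  · rintro ⟨h1, h2⟩
    unfold Multigraph.Disconnects at *
    push Not at *
    refine conn_up D w hw F ?_ h2
    intro e i j hi hj
    have := h1 hi hj rfl
    simpa using this

lemma count_trans {E : Type} [Fintype E] (w : E → ℕ) (F' : Finset E) :
    ((Finset.univ : Finset (Finset (Σ e : E, Fin (w e)))).filter fun F =>
      F.image Sigma.fst = F' ∧ F'.card = F.card).card = ∏ e ∈ F', w e := by
  have : ∏ e ∈ F', w e = (F'.pi fun e => (Finset.univ : Finset (Fin (w e)))).card := by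
    rw [Finset.card_pi]; simp
  rw [this]
  symm
  have hinj : ∀ p : (∀ e ∈ F', Fin (w e)), Function.Injective
      (fun e : {x // x ∈ F'} => (⟨e.1, p e.1 e.2⟩ : Σ e : E, Fin (w e))) := by
    intro p a b hab
    simp only [Sigma.mk.injEq] at hab
    exact Subtype.ext hab.1
  refine Finset.card_bij (fun p _ => F'.attach.image
    (fun e : {x // x ∈ F'} => (⟨e.1, p e.1 e.2⟩ : Σ e : E, Fin (w e)))) ?_ ?_ ?_
  · intro p _
    simp only [Finset.mem_filter, Finset.mem_univ, true_and]
    constructor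
    · rw [Finset.image_image]
      ext e
      simp
    · rw [Finset.card_image_of_injective _ (hinj p)]
      simp
  · intro p _ p' _ h
    funext e he
    have h1 : (⟨e, p e he⟩ : Σ e : E, Fin (w e)) ∈ F'.attach.image
      (fun e : {x // x ∈ F'} => (⟨e.1, p e.1 e.2⟩ : Σ e : E, Fin (w e))) :=
      Finset.mem_image.2 ⟨⟨e, he⟩, by simp, rfl⟩
    rw [h] at h1
    obtain ⟨⟨e', he'⟩, _, h2⟩ := Finset.mem_image.1 h1
    simp only at h2
    have h3 : e' = e := congrArg Sigma.fst h2
    subst h3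
    simpa using h2.symm
  · intro F hF
    simp only [Finset.mem_filter, Finset.mem_univ, true_and] at hF
    obtain ⟨h1, h2⟩ := hF
    have hex : ∀ e, ∀ he : e ∈ F', ∃ j : Fin (w e), (⟨e, j⟩ : Σ e : E, Fin (w e)) ∈ F := by
      intro e he
      rw [← h1] at he
      obtain ⟨⟨e', j⟩, h3, h4⟩ := Finset.mem_image.1 he
      simp only at h4
      subst h4
      exact ⟨j, h3⟩
    choose p hp using hex
    refine ⟨p, by simp, ?_⟩
    apply Finset.eq_of_subset_of_card_le
    · intro x hx
      obtain ⟨⟨e, he⟩, _, rfl⟩ := Finset.mem_image.1 hx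
      exact hp e he
    · rw [Finset.card_image_of_injective _ (hinj p)]
      simp [h2]

lemma count_nondisc {E : Type} [Fintype E] (w : E → ℕ)
    (Q : Finset (Σ e : E, Fin (w e)) → Prop) (Q' : Finset E → Prop)
    (hQ : ∀ F, ¬ Q F ↔ (F.image Sigma.fst).card = F.card ∧ ¬ Q' (F.image Sigma.fst)) :
    ((Finset.univ : Finset (Finset (Σ e : E, Fin (w e)))).filter
        fun F => F.card = 3 ∧ ¬ Q F).card =
      ∑ F ∈ (Finset.univ : Finset (Finset E)).filter
        fun F => F.card = 3 ∧ ¬ Q' F, ∏ e ∈ F, w e := by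
  rw [Finset.card_eq_sum_card_fiberwise (f := fun F => F.image Sigma.fst)
    (t := (Finset.univ : Finset (Finset E)).filter fun F => F.card = 3 ∧ ¬ Q' F)]
  · refine Finset.sum_congr rfl fun F' hF' => ?_
    rw [← count_trans]
    congr 1
    ext F
    simp only [Finset.mem_filter, Finset.mem_univ, true_and] at hF' ⊢
    rw [hQ]
    constructor
    · rintro ⟨⟨h1, h2, h3⟩, rfl⟩
      exact ⟨rfl, h2⟩
    · rintro ⟨rfl, h2⟩
      exact ⟨⟨by omega, h2, hF'.2⟩, rfl⟩
  · intro F hF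
    have hF := (Finset.mem_filter.1 (Finset.mem_coe.1 hF)).2
    rw [hQ] at hF
    exact Finset.mem_coe.2 (Finset.mem_filter.2 ⟨Finset.mem_univ _, hF.2.1.trans hF.1, hF.2.2⟩)

lemma d3_formula (D : Multigraph) (w : D.E → ℕ) (hw : ∀ e, 0 < w e) :
    (subdivide D w).d 3 + (Finset.univ.val.map w).esymm 3 =
      (∑ e, w e).choose 3 + P3 D w := by
  have hE3 : (Finset.univ.val.map w).esymm 3 =
      P3 D w + ∑ F ∈ (Finset.univ : Finset (Finset D.E)).filter
        fun F => F.card = 3 ∧ ¬ D.Disconnects F, ∏ e ∈ F, w e := by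
    rw [Finset.esymm_map_val]
    unfold P3
    have h1 : Finset.powersetCard 3 (Finset.univ : Finset D.E) =
      (Finset.univ : Finset (Finset D.E)).filter fun F => F.card = 3 := by
      ext F; simp [Finset.mem_powersetCard]
    rw [h1, ← Finset.sum_filter_add_sum_filter_not _ (fun F => D.Disconnects F),
      Finset.filter_filter, Finset.filter_filter]
  have hC : (∑ e, w e).choose 3 = (subdivide D w).d 3 +
      ((Finset.univ : Finset (Finset (subdivide D w).E)).filter
        fun F => F.card = 3 ∧ ¬ (subdivide D w).Disconnects F).card := by
    have h0 : (∑ e, w e) = Fintype.card (subdivide D w).E := by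
      change _ = Fintype.card (Σ e : D.E, Fin (w e))
      simp
    have h1 : (Fintype.card (subdivide D w).E).choose 3 =
      ((Finset.univ : Finset (Finset (subdivide D w).E)).filter fun F => F.card = 3).card := by
      rw [← Finset.card_univ, ← Finset.card_powersetCard]
      congr 1
      ext F; simp [Finset.mem_powersetCard]
    rw [h0, h1, ← Finset.card_filter_add_card_filter_not (fun F => (subdivide D w).Disconnects F),
      Finset.filter_filter, Finset.filter_filter]
    rfl
  have hN : ((Finset.univ : Finset (Finset (subdivide D w).E)).filter
        fun F => F.card = 3 ∧ ¬ (subdivide D w).Disconnects F).card =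
      ∑ F ∈ (Finset.univ : Finset (Finset D.E)).filter
        fun F => F.card = 3 ∧ ¬ D.Disconnects F, ∏ e ∈ F, w e := by
    exact count_nondisc w _ _ (conn_iff D w hw)
  omega

lemma esymm_eq {E E' : Type} [Fintype E] [Fintype E'] (w : E → ℕ) (w' : E' → ℕ) (a b : ℕ)
    (hc : Fintype.card E = Fintype.card E')
    (h : ∀ e, w e = a ∨ w e = a + 1) (h' : ∀ e, w' e = a ∨ w' e = a + 1)
    (hb : (Finset.univ.filter fun e => w e = a + 1).card = b)
    (hb' : (Finset.univ.filter fun e => w' e = a + 1).card = b) :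
    Finset.univ.val.map w = Finset.univ.val.map w' := by
  have t1 := two_card Finset.univ w a (fun e _ => h e)
  have t2 := two_card Finset.univ w' a (fun e _ => h' e)
  rw [Finset.card_univ] at t1 t2
  have gen : ∀ {E : Type} [Fintype E] (w : E → ℕ) (c : ℕ),
      Multiset.count c (Finset.univ.val.map w) = (Finset.univ.filter fun e => w e = c).card := by
    intro E _ w c
    rw [Multiset.count_map]
    simp only [Finset.card, Finset.filter_val, eq_comm]
  ext c
  rw [gen, gen]
  by_cases h1 : c = a
  · subst h1; omega
  · by_cases h2 : c = a + 1
    · subst h2; omega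
    · rw [Finset.filter_false_of_mem, Finset.filter_false_of_mem]
      · simp
      · intro e _; have := h' e; omega
      · intro e _; have := h e; omega

open Multigraph

def msr (k e : ℕ) : ℕ := if e < k then e else if e < 2 * k then 2 * (e - k) else 2 * (e - 2 * k) + 1

def mtg (k e : ℕ) : ℕ := if e < k then e + k else if e < 2 * k then 2 * (e - k) + 1 else
  if e + 1 = 3 * k then 0 else 2 * (e - 2 * k) + 2

lemma msr_lt {k e : ℕ} (he : e < 3 * k) : msr k e < 2 * k := by
  unfold msr; split_ifs <;> omega

lemma mtg_lt {k e : ℕ} (he : e < 3 * k) : mtg k e < 2 * k := by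
  unfold mtg; split_ifs <;> omega

/-- The Möbius ladder. -/
def mob (k : ℕ) : Multigraph where
  V := Fin (2 * k)
  E := Fin (3 * k)
  src e := ⟨msr k e.val, msr_lt e.isLt⟩
  tgt e := ⟨mtg k e.val, mtg_lt e.isLt⟩

lemma prop_aux1 (a b c : Prop) (h : ¬ (a ↔ b)) : ¬ (b ↔ c) ↔ ¬ ¬ (a ↔ c) := by
  by_cases a <;> by_cases b <;> by_cases c <;> simp_all

lemma prop_aux2 (a b c : Prop) (h : ¬ (a ↔ b) ↔ c) : a ↔ (b ↔ ¬ c) := by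
  by_cases a <;> by_cases b <;> by_cases c <;> simp_all

lemma prop_aux3 (a c : Prop) : (a ↔ ¬ c) ↔ (¬ a ↔ c) := by
  by_cases a <;> by_cases c <;> simp_all

lemma prop_aux4 (a b c d x : Prop) (ha : a ↔ (x ↔ ¬ c)) (hb : b ↔ (x ↔ ¬ d))
    (h : ¬ (c ↔ d)) : ¬ (a ↔ b) := by
  by_cases a <;> by_cases b <;> by_cases c <;> by_cases d <;> by_cases x <;> simp_all

lemma parity_lem (y : ℕ → Prop) (n : ℕ) :
    (¬ (y n ↔ y 0)) ↔ Odd ((Finset.range n).filter fun i => ¬ (y i ↔ y (i + 1))).card := by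
  induction n with
  | zero => simp
  | succ n ih =>
    rw [Finset.range_add_one, Finset.filter_insert]
    by_cases h : y n ↔ y (n + 1)
    · rw [if_neg (not_not.2 h), ← ih, h]
    · rw [if_pos h, Finset.card_insert_of_notMem (by simp), Nat.odd_add_one, ← ih]
      exact prop_aux1 _ _ _ h

def crossSet (k : ℕ) (x : ℕ → Prop) : Finset ℕ :=
  (Finset.range (3 * k)).filter fun e => ¬ (x (msr k e) ↔ x (mtg k e))

def rail (k i : ℕ) : ℕ := if i % 2 = 0 then k + i / 2 else 2 * k + i / 2

lemma crossSet_lt (k : ℕ) (x : ℕ → Prop) (z : ℕ) (hz : z ∈ crossSet k x) : z < 3 * k := by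
  unfold crossSet at hz
  exact Finset.mem_range.1 (Finset.mem_filter.1 hz).1

lemma rail_cross (k : ℕ) (hk : 2 ≤ k) (x : ℕ → Prop) (i : ℕ) (hi : i < 2 * k)
    (h : ¬ (x (i % (2 * k)) ↔ x ((i + 1) % (2 * k)))) : rail k i ∈ crossSet k x := by
  unfold crossSet
  rw [Finset.mem_filter, Finset.mem_range]
  have h1 : rail k i < 3 * k := by unfold rail; split_ifs <;> omega
  have h2 : msr k (rail k i) = i := by unfold msr rail; split_ifs <;> omega
  have h3 : mtg k (rail k i) = (i + 1) % (2 * k) := by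
    by_cases h4 : i + 1 = 2 * k
    · rw [h4, Nat.mod_self]
      unfold mtg rail; split_ifs <;> omega
    · rw [Nat.mod_eq_of_lt (by omega)]
      unfold mtg rail; split_ifs <;> omega
  rw [h2, h3]
  rw [Nat.mod_eq_of_lt hi] at h
  exact ⟨h1, h⟩

lemma rail_inj (k i j : ℕ) (hi : i < 2 * k) (hj : j < 2 * k) (h : rail k i = rail k j) : i = j := by
  unfold rail at h; split_ifs at h <;> omega

lemma rail_ge (k i : ℕ) : k ≤ rail k i := by
  unfold rail; split_ifs <;> omega

lemma rung_cross (k : ℕ) (x : ℕ → Prop) (i : ℕ) (hi : i < k)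
    (h : ¬ (x i ↔ x (i + k))) : i ∈ crossSet k x := by
  unfold crossSet
  rw [Finset.mem_filter, Finset.mem_range]
  refine ⟨by omega, ?_⟩
  unfold msr mtg
  rw [if_pos hi, if_pos hi]
  exact h

lemma rungs_exist (k p q : ℕ) (hk : 2 ≤ k) (hpq : p + 2 ≤ q) (hq : q < 2 * k)
    (hd : q ≤ p + 2 * k - 2) : ∃ i j, i < k ∧ j < k ∧ i ≠ j ∧
      ¬ ((p < i ∧ i ≤ q) ↔ (p < i + k ∧ i + k ≤ q)) ∧
      ¬ ((p < j ∧ j ≤ q) ↔ (p < j + k ∧ j + k ≤ q)) := by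
  by_cases h : q ≤ p + k
  · refine ⟨if p + 1 < k then p + 1 else p + 1 - k, if p + 2 < k then p + 2 else p + 2 - k, ?_⟩
    split_ifs <;> refine ⟨?_, ?_, ?_, ?_, ?_⟩ <;> omega
  · refine ⟨if q + 1 < 2 * k then q + 1 - k else 0,
      if q + 2 < 2 * k then q + 2 - k else q + 2 - 2 * k, ?_⟩
    split_ifs <;> refine ⟨?_, ?_, ?_, ?_, ?_⟩ <;> omega

lemma mob_cut (k : ℕ) (hk : 2 ≤ k) (x : ℕ → Prop) :
    4 ≤ (crossSet k x).card ∨ (∀ n < 2 * k, x n ↔ x 0) ∨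
      ∃ u < 2 * k, ∃ c : Prop, ∀ n < 2 * k, (x n ↔ (c ↔ n = u)) := by
  let y : ℕ → Prop := fun i => x (i % (2 * k))
  have hy : ∀ n < 2 * k, (y n ↔ x n) := by
    intro n hn
    simp only [y]; rw [Nat.mod_eq_of_lt hn]
  have hy0 := hy 0 (by omega)
  let T := (Finset.range (2 * k)).filter fun i => ¬ (y i ↔ y (i + 1))
  have hTm : ∀ i ∈ T, i < 2 * k ∧ rail k i ∈ crossSet k x := by
    intro i hi
    have h1 := Finset.mem_filter.1 hi
    have h2 := Finset.mem_range.1 h1.1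
    exact ⟨h2, rail_cross k hk x i h2 h1.2⟩
  have hsub : ∀ n ≤ 2 * k, (Finset.range n).filter (fun i => ¬ (y i ↔ y (i + 1))) =
      T.filter (fun i => i < n) := by
    intro n hn
    ext i
    simp only [T, Finset.mem_filter, Finset.mem_range]
    constructor
    · rintro ⟨h1, h2⟩; exact ⟨⟨by omega, h2⟩, h1⟩
    · rintro ⟨⟨h1, h2⟩, h3⟩; exact ⟨h3, h2⟩
  have hpar : ∀ n < 2 * k, (¬ (x n ↔ x 0)) ↔ Odd (T.filter (fun i => i < n)).card := by
    intro n hn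
    rw [← hsub n hn.le, ← parity_lem, hy n hn, hy0]
  have heven : ¬ Odd T.card := by
    have h1 := parity_lem y (2 * k)
    change _ ↔ Odd T.card at h1
    rw [← h1]
    simp [y]
  by_cases h4 : 4 ≤ T.card
  · left
    refine h4.trans ?_
    refine Finset.card_le_card_of_injOn (rail k) (fun i hi => (hTm i hi).2) ?_
    intro i hi j hj hij
    exact rail_inj k i j (hTm i hi).1 (hTm j hj).1 hij
  · have h02 : T.card = 0 ∨ T.card = 2 := by
      rw [Nat.not_odd_iff_even] at heven
      obtain ⟨r, hr⟩ := heven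
      omega
    rcases h02 with h0 | h2
    · right; left
      intro n hn
      by_contra hne
      rw [hpar n hn, Finset.card_eq_zero.1 h0] at hne
      simp at hne
    · obtain ⟨p, q, hpq, hT⟩ : ∃ p q, p < q ∧ T = {p, q} := by
        obtain ⟨p, q, hne, hT⟩ := Finset.card_eq_two.1 h2
        rcases Nat.lt_or_gt_of_ne hne with h | h
        · exact ⟨p, q, h, hT⟩
        · exact ⟨q, p, h, by rw [hT, Finset.pair_comm]⟩
      have hp := hTm p (by rw [hT]; simp)
      have hq := hTm q (by rw [hT]; simp)
      have hx : ∀ n < 2 * k, (x n ↔ (x 0 ↔ ¬ (p < n ∧ n ≤ q))) := by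
        intro n hn
        have h1 := hpar n hn
        have h5 : Odd (T.filter (fun i => i < n)).card ↔ (p < n ∧ n ≤ q) := by
          rw [hT, Finset.filter_insert, Finset.filter_singleton]
          by_cases h6 : p < n
          · by_cases h7 : q < n
            · rw [if_pos h6, if_pos h7, Finset.card_pair hpq.ne]
              constructor
              · intro h; exact absurd h (by decide)
              · intro h; omega
            · rw [if_pos h6, if_neg h7]
              simp
              omega
          · rw [if_neg h6, if_neg (by omega)]
            simp
            omega
        exact prop_aux2 _ _ _ (h1.trans h5)
      by_cases hA : q = p + 1
      · right; right
        refine ⟨q, hq.1, ¬ x 0, ?_⟩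
        intro n hn
        have h6 : (p < n ∧ n ≤ q) ↔ n = q := by omega
        exact (hx n hn).trans ((iff_congr Iff.rfl (not_congr h6)).trans (prop_aux3 _ _))
      · by_cases hB : p = 0 ∧ q + 1 = 2 * k
        · right; right
          refine ⟨0, by omega, x 0, ?_⟩
          intro n hn
          have h6 : ¬ (p < n ∧ n ≤ q) ↔ n = 0 := by omega
          exact (hx n hn).trans (iff_congr Iff.rfl h6)
        · left
          obtain ⟨i, j, hi, hj, hij, h8, h9⟩ := rungs_exist k p q hk (by omega) hq.1 (by omega)
          have hci : i ∈ crossSet k x := by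
            apply rung_cross k x i hi
            exact prop_aux4 _ _ _ _ _ (hx i (by omega)) (hx (i + k) (by omega)) h8
          have hcj : j ∈ crossSet k x := by
            apply rung_cross k x j hj
            exact prop_aux4 _ _ _ _ _ (hx j (by omega)) (hx (j + k) (by omega)) h9
          have hne : rail k p ≠ rail k q := fun h => hpq.ne (rail_inj k p q hp.1 hq.1 h)
          have hgp := rail_ge k p
          have hgq := rail_ge k q
          have hcard : ({rail k p, rail k q, i, j} : Finset ℕ).card = 4 := by
            rw [Finset.card_insert_of_notMem, Finset.card_insert_of_notMem,
              Finset.card_insert_of_notMem] <;>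
              simp only [Finset.mem_insert, Finset.mem_singleton, Finset.card_singleton] <;> omega
          rw [← hcard]
          apply Finset.card_le_card
          intro z hz
          simp only [Finset.mem_insert, Finset.mem_singleton] at hz
          rcases hz with rfl | rfl | rfl | rfl
          · exact hp.2
          · exact hq.2
          · exact hci
          · exact hcj


structure IsMob (k : ℕ) (D : Multigraph) (ei : D.E → ℕ) (vi : D.V → ℕ) : Prop where
  ei_lt : ∀ e, ei e < 3 * k
  ei_inj : ∀ e f, ei e = ei f → e = f
  ei_surj : ∀ n, n < 3 * k → ∃ e, ei e = n
  vi_lt : ∀ e, vi e < 2 * k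
  vi_inj : ∀ e f, vi e = vi f → e = f
  vi_surj : ∀ n, n < 2 * k → ∃ e, vi e = n
  hs : ∀ e, vi (D.src e) = msr k (ei e)
  ht : ∀ e, vi (D.tgt e) = mtg k (ei e)
  cE : Fintype.card D.E = 3 * k
  cV : Fintype.card D.V = 2 * k

lemma mob_exists (k : ℕ) : ∃ D ei vi, IsMob k D ei vi := by
  refine ⟨mob k, fun e => Fin.val (n := 3 * k) e, fun e => Fin.val (n := 2 * k) e, ?_⟩
  refine ⟨fun e => Fin.isLt (n := 3 * k) e, fun e f h => Fin.ext (n := 3 * k) h,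
    fun n h => ⟨(⟨n, h⟩ : Fin (3 * k)), rfl⟩, fun e => Fin.isLt (n := 2 * k) e,
    fun e f h => Fin.ext (n := 2 * k) h,
    fun n h => ⟨(⟨n, h⟩ : Fin (2 * k)), rfl⟩, fun _ => rfl, fun _ => rfl,
    Fintype.card_fin _, Fintype.card_fin _⟩

section
variable {k : ℕ} {D : Multigraph} {ei : D.E → ℕ} {vi : D.V → ℕ}

lemma mob_noloop (hM : IsMob k D ei vi) (hk : 2 ≤ k) (e : D.E) : D.src e ≠ D.tgt e := by
  intro h
  have h1 : msr k (ei e) = mtg k (ei e) := by rw [← hM.hs, ← hM.ht, h]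
  have h2 := hM.ei_lt e
  unfold msr mtg at h1
  split_ifs at h1 <;> omega

lemma mob_star (hM : IsMob k D ei vi) (hk : 2 ≤ k) (u : D.V) :
    ∃ r s t : D.E, ei r < k ∧ k ≤ ei s ∧ ei s < 2 * k ∧ 2 * k ≤ ei t ∧ D.star u = {r, s, t} := by
  have hu := hM.vi_lt u
  obtain ⟨r, hr⟩ := hM.ei_surj (if vi u < k then vi u else vi u - k) (by split_ifs <;> omega)
  obtain ⟨s, hs⟩ := hM.ei_surj (k + vi u / 2) (by omega)
  obtain ⟨t, ht⟩ := hM.ei_surj (if vi u = 0 then 3 * k - 1 else 2 * k + (vi u - 1) / 2)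
    (by split_ifs <;> omega)
  refine ⟨r, s, t, ?_, ?_, ?_, ?_, ?_⟩
  · rw [hr]; split_ifs <;> omega
  · rw [hs]; omega
  · rw [hs]; omega
  · rw [ht]; split_ifs <;> omega
  · ext e
    have he := hM.ei_lt e
    have h0 : ∀ v v' : D.V, v = v' ↔ vi v = vi v' := fun v v' => ⟨fun h => by rw [h], hM.vi_inj v v'⟩
    have h0' : ∀ v v' : D.E, v = v' ↔ ei v = ei v' := fun v v' => ⟨fun h => by rw [h], hM.ei_inj v v'⟩
    simp only [Multigraph.star, Finset.mem_filter, Finset.mem_univ, true_and, Finset.mem_insert,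
      Finset.mem_singleton, h0, h0', hM.hs, hM.ht, hr, hs, ht]
    unfold msr mtg
    generalize ei e = z at *
    generalize vi u = y at *
    split_ifs <;> omega

lemma triple_card (r s t : D.E) (h1 : ei r < k) (h2 : k ≤ ei s)
    (h3 : ei s < 2 * k) (h4 : 2 * k ≤ ei t) : r ∉ ({s, t} : Finset D.E) ∧ s ∉ ({t} : Finset D.E) ∧
    ({r, s, t} : Finset D.E).card = 3 := by
  have b1 : r ≠ s := by rintro rfl; omega
  have b2 : r ≠ t := by rintro rfl; omega
  have b3 : s ≠ t := by rintro rfl; omega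
  have a1 : r ∉ ({s, t} : Finset D.E) := by simp [b1, b2]
  have a2 : s ∉ ({t} : Finset D.E) := by simp [b3]
  refine ⟨a1, a2, ?_⟩
  rw [Finset.card_insert_of_notMem a1, Finset.card_insert_of_notMem a2]
  simp

lemma mob_deg (hM : IsMob k D ei vi) (hk : 2 ≤ k) (u : D.V) : D.deg u = 3 := by
  rw [← star_card' D (mob_noloop hM hk)]
  obtain ⟨r, s, t, h1, h2, h3, h4, h⟩ := mob_star hM hk u
  rw [h]
  exact (triple_card r s t h1 h2 h3 h4).2.2

lemma mob_cut_card (hM : IsMob k D ei vi) (A : Finset D.V) :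
    (D.cutEdges A).card = (crossSet k fun i => ∃ v ∈ A, vi v = i).card := by
  have hx : ∀ v, (∃ v' ∈ A, vi v' = vi v) ↔ v ∈ A :=
    fun v => ⟨fun ⟨v', h, h'⟩ => hM.vi_inj _ _ h' ▸ h, fun h => ⟨v, h, rfl⟩⟩
  have hc : ∀ e, e ∈ D.cutEdges A ↔ ei e ∈ (crossSet k fun i => ∃ v ∈ A, vi v = i) := by
    intro e
    simp only [Multigraph.cutEdges, crossSet, Finset.mem_filter, Finset.mem_univ, true_and,
      Finset.mem_range, hM.ei_lt e, ← hM.hs, ← hM.ht, hx]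
    tauto
  refine Finset.card_bij (fun e _ => ei e) ?_ ?_ ?_
  · intro e he; exact (hc e).1 he
  · intro e _ f _ h; exact hM.ei_inj _ _ h
  · intro z hz
    have hz' : z < 3 * k := crossSet_lt _ _ _ hz
    obtain ⟨e, rfl⟩ := hM.ei_surj z hz'
    exact ⟨e, (hc _).2 hz, rfl⟩

lemma cut_compl (D : Multigraph) (A B : Finset D.V) (h : ∀ v, v ∈ A ↔ v ∉ B) :
    D.cutEdges A = D.cutEdges B := by
  ext e
  simp only [Multigraph.cutEdges, Finset.mem_filter, Finset.mem_univ, true_and, h]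
  tauto

lemma mob_cut_main (hM : IsMob k D ei vi) (hk : 2 ≤ k) (A : Finset D.V) (h1 : A.Nonempty)
    (h2 : A ≠ Finset.univ) :
    4 ≤ (D.cutEdges A).card ∨ ∃ u, D.cutEdges A = D.star u := by
  have hx : ∀ v, (∃ v' ∈ A, vi v' = vi v) ↔ v ∈ A :=
    fun v => ⟨fun ⟨v', h, h'⟩ => hM.vi_inj _ _ h' ▸ h, fun h => ⟨v, h, rfl⟩⟩
  rw [mob_cut_card hM]
  rcases mob_cut k hk (fun i => ∃ v ∈ A, vi v = i) with h | h | h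
  · exact Or.inl h
  · exfalso
    have hall : ∀ v, v ∈ A ↔ ∃ v ∈ A, vi v = 0 := fun v => (hx v).symm.trans (h _ (hM.vi_lt v))
    obtain ⟨a, ha⟩ := h1
    apply h2
    refine Finset.eq_univ_iff_forall.2 fun v => ?_
    exact (hall v).2 ((hall a).1 ha)
  · right
    obtain ⟨u, hu, c, hc⟩ := h
    obtain ⟨u, rfl⟩ := hM.vi_surj u hu
    have hall : ∀ v, v ∈ A ↔ (c ↔ v = u) := fun v => (hx v).symm.trans ((hc _ (hM.vi_lt v)).trans
      (iff_congr Iff.rfl ⟨fun h => hM.vi_inj _ _ h, fun h => by rw [h]⟩))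
    refine ⟨u, ?_⟩
    rw [← star_eq_cut D (mob_noloop hM hk)]
    by_cases hcc : c
    · congr 1
      ext v
      simp [hall, hcc]
    · apply cut_compl
      simp [hall, hcc]

lemma mob_mem (hM : IsMob k D ei vi) (hk : 2 ≤ k) : memDk k D := by
  have h3 : ∀ F : Finset D.E, D.Disconnects F → 3 ≤ F.card := by
    intro F hF
    obtain ⟨A, h1, h2, h3⟩ := D.cut_of_disc F hF
    refine le_trans ?_ (Finset.card_le_card h3)
    rcases mob_cut_main hM hk A h1 h2 with h | ⟨u, h⟩
    · omega
    · rw [h, star_card' D (mob_noloop hM hk), mob_deg hM hk]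
  refine ⟨?_, mob_deg hM hk, h3, ?_⟩
  · by_contra hc
    have := h3 ∅ (by unfold Multigraph.Disconnects; rwa [Finset.sdiff_empty])
    simp at this
  · unfold Multigraph.nE Multigraph.nV
    rw [hM.cE, hM.cV]
    omega

lemma mob_trivial (hM : IsMob k D ei vi) (hk : 2 ≤ k) : OnlyTrivialThreeBonds D := by
  intro F hF hc
  obtain ⟨⟨A, h1, h2, rfl⟩, _⟩ := hF
  rcases mob_cut_main hM hk A h1 h2 with h | ⟨u, h⟩
  · omega
  · exact ⟨u, h⟩

def mobW (k m : ℕ) (n : ℕ) : ℕ := if n < m % (3 * k) then m / (3 * k) + 1 else m / (3 * k)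

lemma mobW_iff (k m n : ℕ) : mobW k m n = m / (3 * k) + 1 ↔ n < m % (3 * k) := by
  unfold mobW
  split_ifs with h <;> simp [h]

lemma mobW_sum (hM : IsMob k D ei vi) (m : ℕ) (hk : 2 ≤ k) : ∑ e, mobW k m (ei e) = m := by
  have hlt : m % (3 * k) < 3 * k := Nat.mod_lt _ (by omega)
  have hmod : 3 * k * (m / (3 * k)) + m % (3 * k) = m := Nat.div_add_mod m (3 * k)
  have h1 := two_sum Finset.univ (fun e => mobW k m (ei e)) (m / (3 * k)) (by
    intro e _; simp only [mobW]; split_ifs <;> simp)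
  rw [h1]
  have h2 : (Finset.univ.filter fun e => mobW k m (ei e) = m / (3 * k) + 1).card =
      (Finset.range (m % (3 * k))).card := by
    refine Finset.card_bij (fun e _ => ei e) ?_ ?_ ?_
    · intro e he
      exact Finset.mem_range.2 ((mobW_iff _ _ _).1 (Finset.mem_filter.1 he).2)
    · intro e _ f _ h; exact hM.ei_inj _ _ h
    · intro z hz
      have hz' := Finset.mem_range.1 hz
      obtain ⟨e, rfl⟩ := hM.ei_surj z (by omega)
      exact ⟨e, Finset.mem_filter.2 ⟨Finset.mem_univ _, (mobW_iff _ _ _).2 hz'⟩, rfl⟩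
  rw [h2, Finset.card_range, Finset.card_univ, hM.cE]
  linarith

lemma zeroAcyclic_of_pos (D : Multigraph) (w : D.E → ℕ) (hpos : ∀ e, w e ≠ 0) :
    ZeroAcyclic D w := by
  unfold ZeroAcyclic
  have h1 : (Finset.univ.filter fun e : D.E => w e = 0) = ∅ :=
    Finset.filter_false_of_mem fun e _ => hpos e
  rw [h1, Finset.card_empty, Nat.add_zero]
  refine Fintype.card_congr ⟨Quot.lift (fun v => v) ?_, Quot.mk _, ?_, ?_⟩
  · rintro a b ⟨e, he, _⟩
    exact absurd he (hpos e)
  · intro q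
    obtain ⟨v, rfl⟩ := Quot.exists_rep q
    rfl
  · intro v; rfl

lemma mob_balW (hM : IsMob k D ei vi) (m : ℕ) (hk : 2 ≤ k) (hm : 3 * k ≤ m) :
    IsBalancedWeighting D (fun e => mobW k m (ei e)) m := by
  have ha : 1 ≤ m / (3 * k) := by rw [Nat.le_div_iff_mul_le (by omega)]; omega
  refine ⟨mobW_sum hM m hk, ?_, zeroAcyclic_of_pos _ _ ?_⟩
  · intro e f
    simp only [mobW]; split_ifs <;> omega
  · intro e
    simp only [mobW]; split_ifs <;> omega

lemma mob_pi (hM : IsMob k D ei vi) (m : ℕ) (hk : 2 ≤ k) (hm : 3 * k ≤ m) :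
    BalancedPiV D (fun e => mobW k m (ei e)) (stdWeight m k) := by
  have hmem := mob_mem hM hk
  rw [piV_eq hk hm hmem _ (weights_two hk hmem _ (mob_balW hM m hk hm)).1]
  have key : ∀ u : D.V, ∃ r s t : ℕ, r < k ∧ k ≤ s ∧ s < 2 * k ∧ 2 * k ≤ t ∧ t < 3 * k ∧
      hv D (fun e => mobW k m (ei e)) (m / (3 * k)) u = (if r < m % (3 * k) then 1 else 0) +
        ((if s < m % (3 * k) then 1 else 0) + (if t < m % (3 * k) then 1 else 0)) := by
    intro u
    obtain ⟨r, s, t, h1, h2, h3, h4, h⟩ := mob_star hM hk u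
    refine ⟨ei r, ei s, ei t, h1, h2, h3, h4, hM.ei_lt t, ?_⟩
    unfold hv
    obtain ⟨a1, a2, _⟩ := triple_card r s t h1 h2 h3 h4
    rw [h, Finset.card_filter, Finset.sum_insert a1, Finset.sum_insert a2, Finset.sum_singleton]
    simp only [mobW_iff]
  intro u v
  obtain ⟨r, s, t, h1, h2, h3, h4, h5, h⟩ := key u
  obtain ⟨r', s', t', h1', h2', h3', h4', h5', h'⟩ := key v
  rw [h, h']
  split_ifs <;> omega

end

lemma d3_le_iff {k m : ℕ} (hk : 2 ≤ k) (hm : 3 * k ≤ m) {D D' : Multigraph} (hD : memDk k D)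
    (hD' : memDk k D') (w : D.E → ℕ) (w' : D'.E → ℕ) (hw : IsBalancedWeighting D w m)
    (hw' : IsBalancedWeighting D' w' m) :
    (subdivide D w).d 3 ≤ (subdivide D' w').d 3 ↔ P3 D w ≤ P3 D' w' := by
  have ha : 1 ≤ m / (3 * k) := by rw [Nat.le_div_iff_mul_le (by omega)]; omega
  obtain ⟨h1, h2⟩ := weights_two hk hD w hw
  obtain ⟨h1', h2'⟩ := weights_two hk hD' w' hw'
  have e1 := d3_formula D w (fun e => by rcases h1 e with h | h <;> omega)
  have e2 := d3_formula D' w' (fun e => by rcases h1' e with h | h <;> omega)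
  have e3 := esymm_eq w w' _ _ ((memDk_card hD).2.trans (memDk_card hD').2.symm) h1 h1' h2 h2'
  rw [hw.1] at e1
  rw [hw'.1, ← e3] at e2
  omega
/-- for k ≥ 2 and m ≥ 3k, a balanced weighting w of D ∈ 𝒟_k gives a graph
minimizing d₃ within ℬ_m(𝒟_k) iff all 3-bonds of D are trivial and the π^v-values of D
are balanced. -/
theorem d3_min_in_BmDk (k m : ℕ) (hk : 2 ≤ k) (hm : 3 * k ≤ m)
    (D : Multigraph) (hD : memDk k D) (w : D.E → ℕ) (hw : IsBalancedWeighting D w m) :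
    (∀ (D' : Multigraph) (w' : D'.E → ℕ), memDk k D' → IsBalancedWeighting D' w' m →
        (subdivide D w).d 3 ≤ (subdivide D' w').d 3) ↔
      (OnlyTrivialThreeBonds D ∧ BalancedPiV D w (stdWeight m k)) := by
  have ha : 1 ≤ m / (3 * k) := by rw [Nat.le_div_iff_mul_le (by omega)]; omega
  have hpos : ∀ (D' : Multigraph) (w' : D'.E → ℕ), memDk k D' → IsBalancedWeighting D' w' m →
      ∀ e, 0 < w' e := by
    intro D' w' hD' hw' e
    rcases (weights_two hk hD' w' hw').1 e with h | h <;> omega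
  obtain ⟨p1, p2⟩ := P3_ge hk hD w (hpos D w hD hw)
  obtain ⟨s1, s2⟩ := S3_ge hk hm hD w hw
  constructor
  · intro hmin
    obtain ⟨M, ei, vi, hM⟩ := mob_exists k
    have hMm := mob_mem hM hk
    have hMw := mob_balW hM m hk hm
    have h1 := (d3_le_iff hk hm hD hMm w _ hw hMw).1 (hmin M _ hMm hMw)
    have h2 := (P3_ge hk hMm _ (hpos M _ hMm hMw)).2.2 (mob_trivial hM hk)
    have h3 := (S3_ge hk hm hMm _ hMw).2.2 (mob_pi hM m hk hm)
    exact ⟨p2.1 (by omega), s2.1 (by omega)⟩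
  · rintro ⟨ht, hb⟩ D' w' hD' hw'
    rw [d3_le_iff hk hm hD hD' w w' hw hw']
    have h1 := p2.2 ht
    have h2 := s2.2 hb
    have h3 := (P3_ge hk hD' w' (hpos D' w' hD' hw')).1
    have h4 := (S3_ge hk hm hD' w' hw').1
    omega
end
end

section
/- Among all graphs in G_{6,11}, there is a unique graph G that is p-optimal for all sufficiently large p ∈ (0,1): G is the simple graph on 6 vertices with degree sequence (4,4,4,4,3,3) whose two degree-3 vertices are non-adjacent, and G is a balanced weak subdivision of the Petersen graph. Moreover, the other simple graph G′ on 6 vertices with degree sequence (4,4,4,4,3,3) (with its two degree-3 vertices adjacent), which is also a balanced weak subdivision of the Petersen graph, has 225 spanning trees while G has 224, so G′ is strictly more reliable than G for all sufficiently small p. In particular, no uniquely optimal graph exists in G_{6,11}. -/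
open Classical Finset

noncomputable section

namespace Multigraph

theorem connOn_iff (G : Multigraph) (S : Finset G.E) :
    G.ConnOn S ↔ ∀ A : Finset G.V, A.Nonempty → A ≠ Finset.univ →
      ∃ e ∈ S, e ∈ G.cutEdges A := by
  constructor
  · intro h A hA hU
    obtain ⟨u, hu⟩ := hA
    obtain ⟨v, hv⟩ : ∃ v, v ∉ A := by
      by_contra hc
      push Not at hc
      exact hU (Finset.eq_univ_iff_forall.2 hc)
    by_contra hno
    push Not at hno
    have key : ∀ x, Relation.ReflTransGen (G.stepOn S) u x → x ∈ A := by
      intro x hx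
      induction hx with
      | refl => exact hu
      | tail _ hst ih =>
        obtain ⟨e, he, h'⟩ := hst
        have h2 := hno e he
        simp only [cutEdges, Finset.mem_filter, Finset.mem_univ, true_and] at h2
        rcases h' with ⟨rfl, rfl⟩ | ⟨rfl, rfl⟩ <;> tauto
    exact hv (key v (h u v))
  · intro h u v
    by_contra hv
    obtain ⟨e, he, h2⟩ := h (Finset.univ.filter fun x => Relation.ReflTransGen (G.stepOn S) u x)
      ⟨u, by simp [Relation.ReflTransGen.refl]⟩
      (fun hc => hv (by
        have : v ∈ (Finset.univ.filter fun x => Relation.ReflTransGen (G.stepOn S) u x) := by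
          rw [hc]; exact Finset.mem_univ _
        simpa using this))
    simp only [cutEdges, Finset.mem_filter, Finset.mem_univ, true_and] at h2
    rcases h2 with ⟨h1, h2⟩ | ⟨h1, h2⟩
    · exact h2 (h1.tail ⟨e, he, Or.inl ⟨rfl, rfl⟩⟩)
    · exact h1 (h2.tail ⟨e, he, Or.inr ⟨rfl, rfl⟩⟩)

theorem disconnects_iff (G : Multigraph) (F : Finset G.E) :
    G.Disconnects F ↔ ∃ A : Finset G.V, A.Nonempty ∧ A ≠ Finset.univ ∧ G.cutEdges A ⊆ F := by
  unfold Disconnects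
  rw [connOn_iff]
  push Not
  refine exists_congr fun A => and_congr_right fun _ => and_congr_right fun _ => ?_
  constructor
  · intro h e he
    by_contra hf
    exact h e (by simp [hf]) he
  · intro h e he hc
    simp only [Finset.mem_sdiff, Finset.mem_univ, true_and] at he
    exact he (h hc)

theorem cutEdges_symmDiff (G : Multigraph) (A B : Finset G.V) :
    G.cutEdges (symmDiff A B) = symmDiff (G.cutEdges A) (G.cutEdges B) := by
  ext e
  simp only [cutEdges, Finset.mem_filter, Finset.mem_univ, true_and, Finset.mem_symmDiff]
  tauto

/-- Number of connected spanning edge sets of a given size. -/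
def c (G : Multigraph) (i : ℕ) : ℕ :=
  ((Finset.univ : Finset (Finset G.E)).filter fun S => S.card = i ∧ G.ConnOn S).card

theorem rel_eq_c (G : Multigraph) (p : ℝ) :
    G.rel p = ∑ i ∈ Finset.range (G.nE + 1), (G.c i : ℝ) * (p ^ i * (1 - p) ^ (G.nE - i)) := by
  unfold rel
  rw [← Finset.sum_fiberwise_of_maps_to (s := Finset.univ) (t := Finset.range (G.nE + 1))
    (g := fun S : Finset G.E => S.card)
    (fun S _ => Finset.mem_range.2 (Nat.lt_succ_of_le (Finset.card_le_univ S)))]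
  refine Finset.sum_congr rfl fun i _ => ?_
  rw [← Finset.sum_filter, Finset.filter_filter]
  rw [Finset.sum_congr rfl (g := fun _ => p ^ i * (1 - p) ^ (G.nE - i))]
  · rw [Finset.sum_const, nsmul_eq_mul]; rfl
  · intro S hS
    rw [(Finset.mem_filter.1 hS).2.1]

theorem one_sub_rel (G : Multigraph) (p : ℝ) :
    1 - G.rel p = ∑ i ∈ Finset.range (G.nE + 1), (G.d i : ℝ) * ((1 - p) ^ i * p ^ (G.nE - i)) := by
  have h1 : (1 : ℝ) = ∑ S : Finset G.E, p ^ S.card * (1 - p) ^ (G.nE - S.card) := by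
    have := Finset.sum_pow_mul_eq_add_pow p (1 - p) (Finset.univ : Finset G.E)
    simp only [Finset.powerset_univ, add_sub_cancel, one_pow, Finset.card_univ] at this
    exact this.symm
  have h2 : 1 - G.rel p = ∑ F : Finset G.E,
      if G.Disconnects F then (1 - p) ^ F.card * p ^ (G.nE - F.card) else 0 := by
    conv_lhs => rw [h1]
    unfold rel
    rw [← Finset.sum_sub_distrib]
    refine Fintype.sum_bijective (fun S : Finset G.E => Finset.univ \ S) ?_ _ _ ?_
    · apply Function.Involutive.bijective
      intro S; simp
    · intro S
      have hc : (Finset.univ \ S).card = G.nE - S.card := by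
        rw [Finset.card_sdiff_of_subset (Finset.subset_univ S)]; rfl
      have hle : S.card ≤ G.nE := Finset.card_le_univ S
      have hd : G.Disconnects (Finset.univ \ S) ↔ ¬ G.ConnOn S := by
        unfold Disconnects; simp
      rw [hc, Nat.sub_sub_self hle]
      by_cases h : G.ConnOn S
      · simp [hd, h]
      · simp [hd, h, mul_comm]
  rw [h2, ← Finset.sum_fiberwise_of_maps_to (s := Finset.univ) (t := Finset.range (G.nE + 1))
    (g := fun S : Finset G.E => S.card)
    (fun S _ => Finset.mem_range.2 (Nat.lt_succ_of_le (Finset.card_le_univ S)))]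
  refine Finset.sum_congr rfl fun i _ => ?_
  rw [← Finset.sum_filter, Finset.filter_filter]
  rw [Finset.sum_congr rfl (g := fun _ => (1 - p) ^ i * p ^ (G.nE - i))]
  · rw [Finset.sum_const, nsmul_eq_mul]; rfl
  · intro S hS
    rw [(Finset.mem_filter.1 hS).2.1]

theorem d_le (G : Multigraph) (i : ℕ) : G.d i ≤ 2 ^ G.nE := by
  unfold d
  refine (Finset.card_le_univ _).trans ?_
  rw [Fintype.card_finset]; rfl

theorem c_le (G : Multigraph) (i : ℕ) : G.c i ≤ 2 ^ G.nE := by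
  unfold c
  refine (Finset.card_le_univ _).trans ?_
  rw [Fintype.card_finset]; rfl

end Multigraph

theorem MGIso.connOn_iff {G H : Multigraph} (φ : MGIso G H) (S : Finset G.E) :
    H.ConnOn (S.map φ.eMap.toEmbedding) ↔ G.ConnOn S := by
  have hst : ∀ u v, H.stepOn (S.map φ.eMap.toEmbedding) (φ.vMap u) (φ.vMap v) ↔ G.stepOn S u v := by
    intro u v
    unfold Multigraph.stepOn
    constructor
    · rintro ⟨e, he, h⟩
      obtain ⟨e', he', rfl⟩ := Finset.mem_map.1 he
      refine ⟨e', he', ?_⟩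
      have := φ.ends_eq e'
      simp only [Equiv.coe_toEmbedding] at h
      rcases this with ⟨h1, h2⟩ | ⟨h1, h2⟩ <;> rw [h1, h2] at h <;>
        simp only [EmbeddingLike.apply_eq_iff_eq] at h <;> tauto
    · rintro ⟨e, he, h⟩
      refine ⟨φ.eMap e, Finset.mem_map.2 ⟨e, he, rfl⟩, ?_⟩
      have := φ.ends_eq e
      rcases this with ⟨h1, h2⟩ | ⟨h1, h2⟩ <;> rw [h1, h2] <;>
        simp only [EmbeddingLike.apply_eq_iff_eq] <;> tauto
  constructor
  · intro h u v
    have := h (φ.vMap u) (φ.vMap v)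
    have := Relation.ReflTransGen.lift (p := G.stepOn S) φ.vMap.symm (fun a b hab => by
      change G.stepOn S _ _
      rw [← hst]; simpa using hab) _ _ this
    simpa [Function.onFun] using this
  · intro h u v
    have := h (φ.vMap.symm u) (φ.vMap.symm v)
    have := Relation.ReflTransGen.lift (p := H.stepOn (S.map φ.eMap.toEmbedding)) φ.vMap
      (fun a b hab => (hst a b).2 hab) _ _ this
    simpa [Function.onFun] using this

theorem IsIso.rel_eq {G H : Multigraph} (h : IsIso G H) (p : ℝ) : G.rel p = H.rel p := by
  obtain ⟨φ⟩ := h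
  unfold Multigraph.rel
  have hE : G.nE = H.nE := Fintype.card_congr φ.eMap
  refine Fintype.sum_equiv (φ.eMap.finsetCongr) _ _ fun S => ?_
  have := φ.connOn_iff S
  simp only [Equiv.finsetCongr_apply, Finset.card_map, this, hE]

theorem isIso_of {G H : Multigraph} (hE : G.nE = H.nE) (hs : G.IsSimple) (σ : G.V ≃ H.V)
    (h : ∀ e : G.E, ∃ x : H.E, (H.src x = σ (G.src e) ∧ H.tgt x = σ (G.tgt e)) ∨
      (H.src x = σ (G.tgt e) ∧ H.tgt x = σ (G.src e))) : IsIso G H := by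
  choose f hf using h
  have hinj : Function.Injective f := by
    intro e e' hee
    apply hs.2
    have h1 := hf e
    have h2 := hf e'
    rw [← hee] at h2
    rcases h1 with ⟨h1, h1'⟩ | ⟨h1, h1'⟩ <;> rw [h1, h1'] at h2 <;>
      simp only [EmbeddingLike.apply_eq_iff_eq] at h2 <;> tauto
  have hb : Function.Bijective f := (Fintype.bijective_iff_injective_and_card f).2 ⟨hinj, hE⟩
  exact ⟨⟨σ, Equiv.ofBijective f hb, hf⟩⟩

/-- The edges leaving a single vertex. -/
def vstar (H : Multigraph) (v : H.V) : Finset H.E := H.cutEdges {v}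

theorem mem_vstar (H : Multigraph) (v : H.V) (e : H.E) :
    e ∈ vstar H v ↔ (H.src e = v ∧ H.tgt e ≠ v) ∨ (H.src e ≠ v ∧ H.tgt e = v) := by
  simp [vstar, Multigraph.cutEdges]

theorem vstar_count (H : Multigraph) (e : H.E) :
    (Finset.univ.filter fun v => e ∈ vstar H v) =
      if H.src e = H.tgt e then ∅ else {H.src e, H.tgt e} := by
  ext v
  split_ifs with h
  · simp [mem_vstar, h]
  · simp only [mem_vstar, Finset.mem_filter, Finset.mem_univ, true_and, Finset.mem_insert,
      Finset.mem_singleton]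
    constructor
    · rintro (h1 | h1)
      · exact Or.inl h1.1.symm
      · exact Or.inr h1.2.symm
    · rintro (rfl | rfl)
      · exact Or.inl ⟨rfl, fun h' => h h'.symm⟩
      · exact Or.inr ⟨h, rfl⟩

theorem vstar_inter_sum (H : Multigraph) (S : Finset H.E) :
    ∑ v, (vstar H v ∩ S).card = ∑ e ∈ S, (Finset.univ.filter fun v => e ∈ vstar H v).card := by
  have := Finset.sum_card_bipartiteAbove_eq_sum_card_bipartiteBelow
    (s := (Finset.univ : Finset H.V)) (t := S) (fun v e => e ∈ vstar H v)
  simp only [Finset.bipartiteAbove, Finset.bipartiteBelow] at this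
  rw [← this]
  refine Finset.sum_congr rfl fun v _ => ?_
  congr 1
  ext e; simp [and_comm]

theorem vstar_sum_le (H : Multigraph) (hE : H.nE = 11) : ∑ v, (vstar H v).card ≤ 22 := by
  have h := vstar_inter_sum H Finset.univ
  simp only [Finset.inter_univ] at h
  rw [h]
  calc _ ≤ ∑ e : H.E, 2 := Finset.sum_le_sum fun e _ => by
        rw [vstar_count]; split_ifs
        · simp
        · exact Finset.card_le_two
    _ = 22 := by
      rw [Finset.sum_const, Finset.card_univ, show Fintype.card H.E = 11 from hE]; rfl

theorem vstar_inter_row (H : Multigraph) (v : H.V) :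
    ∑ u, (vstar H u ∩ vstar H v).card = 2 * (vstar H v).card := by
  rw [vstar_inter_sum, Finset.sum_congr rfl (g := fun _ => 2)]
  · simp [mul_comm]
  · intro e he
    rw [vstar_count]
    have : H.src e ≠ H.tgt e := by
      rw [mem_vstar] at he
      rintro h
      rw [h] at he; tauto
    rw [if_neg this, Finset.card_pair this]

theorem card_symmDiff_add {α : Type} (s t : Finset α) :
    (symmDiff s t).card + 2 * (s ∩ t).card = s.card + t.card := by
  have h1 : symmDiff s t = (s \ t) ∪ (t \ s) := rfl
  have h2 : Disjoint (s \ t) (t \ s) := disjoint_sdiff_sdiff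
  rw [h1, Finset.card_union_of_disjoint h2]
  have h3 := Finset.card_sdiff_add_card_inter s t
  have h4 := Finset.card_sdiff_add_card_inter t s
  rw [Finset.inter_comm t s] at h4
  omega

/-- A proper nonempty vertex set. -/
def Proper (H : Multigraph) (A : Finset H.V) : Prop := A.Nonempty ∧ A ≠ Finset.univ

theorem proper_of_card (H : Multigraph) (hV : H.nV = 6) (A : Finset H.V) (h0 : 0 < A.card)
    (h6 : A.card < 6) : Proper H A := by
  refine ⟨Finset.card_pos.1 h0, ?_⟩
  rintro rfl
  rw [Finset.card_univ, show Fintype.card H.V = 6 from hV] at h6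
  omega

theorem supersets_card {α : Type} [Fintype α] (h11 : Fintype.card α = 11) (s : Finset α)
    (hs : s.card = 3) :
    ((Finset.univ : Finset (Finset α)).filter fun F => s ⊆ F ∧ F.card = 4).card ≥ 8 := by
  have h : ((Finset.univ \ s).image fun x => insert x s).card = 8 := by
    rw [Finset.card_image_of_injOn, Finset.card_sdiff_of_subset (Finset.subset_univ s),
      Finset.card_univ, h11, hs]
    intro x hx y hy hxy
    simp only [Finset.coe_sdiff, Finset.coe_univ, Set.mem_sdiff, Set.mem_univ, true_and,
      Finset.mem_coe] at hx hy
    have : x ∈ insert y s := by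
      have h := Finset.mem_insert_self x s
      simpa only [hxy] using h
    rcases Finset.mem_insert.1 this with h | h
    · exact h
    · exact absurd h hx
  rw [← h]
  apply Finset.card_le_card
  intro F hF
  obtain ⟨x, hx, rfl⟩ := Finset.mem_image.1 hF
  simp only [Finset.mem_sdiff, Finset.mem_univ, true_and] at hx
  simp [Finset.card_insert_of_notMem hx, hs]

/-- Lower bound on the number of 4-disconnections. -/
theorem d4_ge (H : Multigraph) (hV : H.nV = 6) (hE : H.nE = 11)
    (h3 : ∀ A, Proper H A → 3 ≤ (H.cutEdges A).card) (a b : H.V) (hab : a ≠ b)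
    (ha : (vstar H a).card = 3) (hb : (vstar H b).card = 3)
    (h4 : ∀ v, v ≠ a → v ≠ b → (vstar H v).card = 4)
    (A : Finset H.V) (hA : A.card = 2) (hA4 : (H.cutEdges A).card = 4) :
    21 ≤ H.d 4 := by
  have hVV : Fintype.card H.V = 6 := hV
  let sets : Finset (Finset H.V) :=
    insert A ((Finset.univ \ {a, b}).image fun v => ({v} : Finset H.V))
  have hsc : ∀ B ∈ sets, 0 < B.card ∧ B.card ≤ 2 ∧ (H.cutEdges B).card = 4 := by
    intro B hB
    rcases Finset.mem_insert.1 hB with rfl | hB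
    · exact ⟨by omega, by omega, hA4⟩
    · obtain ⟨v, hv, rfl⟩ := Finset.mem_image.1 hB
      simp only [Finset.mem_sdiff, Finset.mem_univ, true_and, Finset.mem_insert,
        Finset.mem_singleton, not_or] at hv
      exact ⟨by simp, by simp, h4 v hv.1 hv.2⟩
  have hsd : ∀ B C : Finset H.V, B.card ≤ 2 → C.card ≤ 2 → B ≠ C →
      3 ≤ (symmDiff (H.cutEdges B) (H.cutEdges C)).card := by
    intro B C hB hC hne
    rw [← Multigraph.cutEdges_symmDiff]
    apply h3
    have := card_symmDiff_add B C
    apply proper_of_card H hV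
    · rw [Finset.card_pos, Finset.nonempty_iff_ne_empty]
      intro h
      exact hne (symmDiff_eq_bot.1 h)
    · omega
  have hsets : sets.card = 5 := by
    rw [Finset.card_insert_of_notMem, Finset.card_image_of_injective,
      Finset.card_sdiff_of_subset (Finset.subset_univ _), Finset.card_univ, hVV,
      Finset.card_pair hab]
    · exact Finset.singleton_injective
    · intro h
      obtain ⟨v, _, rfl⟩ := Finset.mem_image.1 h
      simp at hA
  let cuts := sets.image H.cutEdges
  have hcuts : cuts.card = 5 := by
    rw [← hsets]
    apply Finset.card_image_of_injOn
    intro B hB C hC hBC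
    by_contra hne
    have := hsd B C (hsc B hB).2.1 (hsc C hC).2.1 hne
    rw [hBC, symmDiff_self] at this
    simp at this
  let X := (Finset.univ : Finset (Finset H.E)).filter fun F => vstar H a ⊆ F ∧ F.card = 4
  let Y := (Finset.univ : Finset (Finset H.E)).filter fun F => vstar H b ⊆ F ∧ F.card = 4
  have hX : 8 ≤ X.card := supersets_card hE _ ha
  have hY : 8 ≤ Y.card := supersets_card hE _ hb
  have hXY : Disjoint X Y := by
    rw [Finset.disjoint_left]
    intro F hF hF'
    have h1 := (Finset.mem_filter.1 hF).2
    have h2 := (Finset.mem_filter.1 hF').2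
    have h5 := Finset.card_le_card (Finset.union_subset h1.1 h2.1)
    have h6 := Finset.card_union_add_card_inter (vstar H a) (vstar H b)
    have h7 := card_symmDiff_add (vstar H a) (vstar H b)
    have h8 := hsd {a} {b} (by simp) (by simp) (by simpa using hab)
    change 3 ≤ (symmDiff (vstar H a) (vstar H b)).card at h8
    omega
  have hcut : ∀ v, (vstar H v).card = 3 → ∀ F ∈ cuts, ¬ vstar H v ⊆ F := by
    intro v hv F hF hs
    obtain ⟨B, hB, rfl⟩ := Finset.mem_image.1 hF
    have hB' := hsc B hB
    have h8 := hsd {v} B (by simp) hB'.2.1 (by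
      rintro rfl
      change _ ∧ _ ∧ (vstar H v).card = 4 at hB'
      omega)
    change 3 ≤ (symmDiff (vstar H v) _).card at h8
    have h7 := card_symmDiff_add (vstar H v) (H.cutEdges B)
    rw [Finset.inter_eq_left.2 hs] at h7
    omega
  have hXYZ : Disjoint (X ∪ Y) cuts := by
    rw [Finset.disjoint_left]
    intro F hF hF'
    rcases Finset.mem_union.1 hF with h | h
    · exact hcut a ha F hF' (Finset.mem_filter.1 h).2.1
    · exact hcut b hb F hF' (Finset.mem_filter.1 h).2.1
  have htot : 21 ≤ ((X ∪ Y) ∪ cuts).card := by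
    rw [Finset.card_union_of_disjoint hXYZ, Finset.card_union_of_disjoint hXY]
    omega
  refine htot.trans ?_
  unfold Multigraph.d
  apply Finset.card_le_card
  have hs1 : ∀ v : H.V, Proper H {v} := fun v => proper_of_card H hV _ (by simp) (by simp)
  intro F hF
  simp only [Finset.mem_filter, Finset.mem_univ, true_and, Multigraph.disconnects_iff]
  rcases Finset.mem_union.1 hF with h | h
  · rcases Finset.mem_union.1 h with h | h
    · have h := (Finset.mem_filter.1 h).2
      exact ⟨h.2, {a}, (hs1 a).1, (hs1 a).2, h.1⟩
    · have h := (Finset.mem_filter.1 h).2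
      exact ⟨h.2, {b}, (hs1 b).1, (hs1 b).2, h.1⟩
  · obtain ⟨B, hB, rfl⟩ := Finset.mem_image.1 h
    have hB := hsc B hB
    have := proper_of_card H hV B hB.1 (by omega)
    exact ⟨hB.2.2, B, this.1, this.2, Finset.Subset.refl _⟩

/-- Sources of the edges of the optimal graph. -/
def gS : Fin 11 → Fin 6 := ![0, 0, 0, 1, 1, 1, 2, 2, 2, 3, 3]
/-- Targets of the edges of the optimal graph. -/
def gT : Fin 11 → Fin 6 := ![3, 4, 5, 2, 4, 5, 3, 4, 5, 4, 5]

/-- The complement of `P₄ ∪ K₂`. -/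
def G0 : Multigraph where
  V := Fin 6
  E := Fin 11
  src := gS
  tgt := gT

theorem perm_aux (m : Fin 6 → Fin 6 → ℕ) (v : Fin 6 → Fin 6) (hv : Function.Injective v)
    (h : ∀ e, m (v (gS e)) (v (gT e)) = 1) :
    ∃ σ : Fin 6 ≃ Fin 6, ∀ e, m (σ (gS e)) (σ (gT e)) = 1 :=
  ⟨Equiv.ofBijective v (Finite.injective_iff_bijective.1 hv), h⟩

theorem row4 {x y z w : ℕ} (hx : x = 0) (hy : y ≤ 1) (hz : z ≤ 1) (hw : w ≤ 1)
    (h : x + y + z + w = 3) : y = 1 ∧ z = 1 ∧ w = 1 := by omega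

theorem comb (m : Fin 6 → Fin 6 → ℕ) (hs : ∀ i j, m i j = m j i)
    (h1 : ∀ i j, i ≠ j → m i j ≤ 1) (h01 : m 0 1 = 0)
    (hd0 : m 0 0 = 3) (hd1 : m 1 1 = 3) (hd : ∀ i, i ≠ 0 → i ≠ 1 → m i i = 4)
    (hr : ∀ i, ∑ j, m i j = 2 * m i i) :
    ∃ σ : Fin 6 ≃ Fin 6, ∀ e, m (σ (gS e)) (σ (gT e)) = 1 := by
  have r0 := hr 0
  have r1 := hr 1
  have r2 := hr 2
  have r3 := hr 3
  have r4 := hr 4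
  have r5 := hr 5
  simp only [Fin.sum_univ_six] at r0 r1 r2 r3 r4 r5
  rw [hs 1 0] at r1
  rw [hs 2 0, hs 2 1] at r2
  rw [hs 3 0, hs 3 1, hs 3 2] at r3
  rw [hs 4 0, hs 4 1, hs 4 2, hs 4 3] at r4
  rw [hs 5 0, hs 5 1, hs 5 2, hs 5 3, hs 5 4] at r5
  have d2 := hd 2 (by decide) (by decide)
  have d3 := hd 3 (by decide) (by decide)
  have d4 := hd 4 (by decide) (by decide)
  have d5 := hd 5 (by decide) (by decide)
  have b02 := h1 0 2 (by decide)
  have b03 := h1 0 3 (by decide)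
  have b04 := h1 0 4 (by decide)
  have b05 := h1 0 5 (by decide)
  have b12 := h1 1 2 (by decide)
  have b13 := h1 1 3 (by decide)
  have b14 := h1 1 4 (by decide)
  have b15 := h1 1 5 (by decide)
  have b23 := h1 2 3 (by decide)
  have b24 := h1 2 4 (by decide)
  have b25 := h1 2 5 (by decide)
  have b34 := h1 3 4 (by decide)
  have b35 := h1 3 5 (by decide)
  have b45 := h1 4 5 (by decide)
  have key : ∀ c d e f : Fin 6, Function.Injective ![0, 1, c, d, e, f] →
      m 0 c = 0 → m 1 d = 0 → m 0 c + m 0 d + m 0 e + m 0 f = 3 →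
      m 1 d + m 1 c + m 1 e + m 1 f = 3 → m 0 c + m 1 c + m c d + m c e + m c f = 4 →
      m 0 d + m 1 d + m c d + m d e + m d f = 4 →
      ∃ σ : Fin 6 ≃ Fin 6, ∀ e, m (σ (gS e)) (σ (gT e)) = 1 := by
    intro c d e f hinj h0c h1d q0 q1 qc qd
    have hne : ∀ i j : Fin 6, i ≠ j → ![0, 1, c, d, e, f] i ≠ ![0, 1, c, d, e, f] j :=
      fun i j hij h => hij (hinj h)
    have n02 : 0 ≠ c := hne 0 2 (by decide)
    have n03 : 0 ≠ d := hne 0 3 (by decide)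
    have n04 : 0 ≠ e := hne 0 4 (by decide)
    have n05 : 0 ≠ f := hne 0 5 (by decide)
    have n12 : 1 ≠ c := hne 1 2 (by decide)
    have n13 : 1 ≠ d := hne 1 3 (by decide)
    have n14 : 1 ≠ e := hne 1 4 (by decide)
    have n15 : 1 ≠ f := hne 1 5 (by decide)
    have n23 : c ≠ d := hne 2 3 (by decide)
    have n24 : c ≠ e := hne 2 4 (by decide)
    have n25 : c ≠ f := hne 2 5 (by decide)
    have n34 : d ≠ e := hne 3 4 (by decide)
    have n35 : d ≠ f := hne 3 5 (by decide)
    obtain ⟨a1, a2, a3⟩ := row4 h0c (h1 _ _ n03) (h1 _ _ n04) (h1 _ _ n05) q0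
    obtain ⟨a4, a5, a6⟩ := row4 h1d (h1 _ _ n12) (h1 _ _ n14) (h1 _ _ n15) q1
    obtain ⟨a7, a8, a9⟩ := row4 h0c (h1 _ _ n23) (h1 _ _ n24) (h1 _ _ n25) (by omega)
    obtain ⟨_, a10, a11⟩ := row4 h1d (h1 _ _ n23) (h1 _ _ n34) (h1 _ _ n35) (by omega)
    refine perm_aux m _ hinj ?_
    intro x
    fin_cases x
    · exact a1
    · exact a2
    · exact a3
    · exact a4
    · exact a5
    · exact a6
    · exact a7
    · exact a8
    · exact a9
    · exact a10
    · exact a11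
  have q0 : m 0 2 + m 0 3 + m 0 4 + m 0 5 = 3 := by omega
  have q1 : m 1 2 + m 1 3 + m 1 4 + m 1 5 = 3 := by omega
  have q2 : m 0 2 + m 1 2 + m 2 3 + m 2 4 + m 2 5 = 4 := by omega
  have q3 : m 0 3 + m 1 3 + m 2 3 + m 3 4 + m 3 5 = 4 := by omega
  have q4 : m 0 4 + m 1 4 + m 2 4 + m 3 4 + m 4 5 = 4 := by omega
  have q5 : m 0 5 + m 1 5 + m 2 5 + m 3 5 + m 4 5 = 4 := by omega
  clear r0 r1 r2 r3 r4 r5 d2 d3 d4 d5 hr hd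
  have e0 : m 0 2 = 0 ∨ m 0 3 = 0 ∨ m 0 4 = 0 ∨ m 0 5 = 0 := by omega
  have e1 : m 1 2 = 0 ∨ m 1 3 = 0 ∨ m 1 4 = 0 ∨ m 1 5 = 0 := by omega
  have s32 := hs 3 2
  have s42 := hs 4 2
  have s52 := hs 5 2
  have s43 := hs 4 3
  have s53 := hs 5 3
  have s54 := hs 5 4
  rcases e0 with e0 | e0 | e0 | e0 <;> rcases e1 with e1 | e1 | e1 | e1
  · exfalso; linarith only [e0, e1, q2, b23, b24, b25]
  · exact key 2 3 4 5 (by decide) e0 e1 (by linarith only [q0]) (by linarith only [q1])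
      (by linarith only [q2, s32, s42, s52, s43, s53, s54]) (by linarith only [q3, s32, s42, s52, s43, s53, s54])
  · exact key 2 4 3 5 (by decide) e0 e1 (by linarith only [q0]) (by linarith only [q1])
      (by linarith only [q2, s32, s42, s52, s43, s53, s54]) (by linarith only [q4, s32, s42, s52, s43, s53, s54])
  · exact key 2 5 3 4 (by decide) e0 e1 (by linarith only [q0]) (by linarith only [q1])
      (by linarith only [q2, s32, s42, s52, s43, s53, s54]) (by linarith only [q5, s32, s42, s52, s43, s53, s54])
  · exact key 3 2 4 5 (by decide) e0 e1 (by linarith only [q0]) (by linarith only [q1])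
      (by linarith only [q3, s32, s42, s52, s43, s53, s54]) (by linarith only [q2, s32, s42, s52, s43, s53, s54])
  · exfalso; linarith only [e0, e1, q3, b23, b34, b35]
  · exact key 3 4 2 5 (by decide) e0 e1 (by linarith only [q0]) (by linarith only [q1])
      (by linarith only [q3, s32, s42, s52, s43, s53, s54]) (by linarith only [q4, s32, s42, s52, s43, s53, s54])
  · exact key 3 5 2 4 (by decide) e0 e1 (by linarith only [q0]) (by linarith only [q1])
      (by linarith only [q3, s32, s42, s52, s43, s53, s54]) (by linarith only [q5, s32, s42, s52, s43, s53, s54])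
  · exact key 4 2 3 5 (by decide) e0 e1 (by linarith only [q0]) (by linarith only [q1])
      (by linarith only [q4, s32, s42, s52, s43, s53, s54]) (by linarith only [q2, s32, s42, s52, s43, s53, s54])
  · exact key 4 3 2 5 (by decide) e0 e1 (by linarith only [q0]) (by linarith only [q1])
      (by linarith only [q4, s32, s42, s52, s43, s53, s54]) (by linarith only [q3, s32, s42, s52, s43, s53, s54])
  · exfalso; linarith only [e0, e1, q4, b24, b34, b45]
  · exact key 4 5 2 3 (by decide) e0 e1 (by linarith only [q0]) (by linarith only [q1])
      (by linarith only [q4, s32, s42, s52, s43, s53, s54]) (by linarith only [q5, s32, s42, s52, s43, s53, s54])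
  · exact key 5 2 3 4 (by decide) e0 e1 (by linarith only [q0]) (by linarith only [q1])
      (by linarith only [q5, s32, s42, s52, s43, s53, s54]) (by linarith only [q2, s32, s42, s52, s43, s53, s54])
  · exact key 5 3 2 4 (by decide) e0 e1 (by linarith only [q0]) (by linarith only [q1])
      (by linarith only [q5, s32, s42, s52, s43, s53, s54]) (by linarith only [q3, s32, s42, s52, s43, s53, s54])
  · exact key 5 4 2 3 (by decide) e0 e1 (by linarith only [q0]) (by linarith only [q1])
      (by linarith only [q5, s32, s42, s52, s43, s53, s54]) (by linarith only [q4, s32, s42, s52, s43, s53, s54])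
  · exfalso; linarith only [e0, e1, q5, b25, b35, b45]

theorem exists_equiv {V : Type} [Fintype V] (hV : Fintype.card V = 6) (a b : V) (hab : a ≠ b) :
    ∃ f : Fin 6 ≃ V, f 0 = a ∧ f 1 = b := by
  let f0 : Fin 6 ≃ V := (Fintype.equivFinOfCardEq hV).symm
  let f1 := f0.trans (Equiv.swap (f0 0) a)
  have h1 : f1 0 = a := by simp [f1]
  let f2 := f1.trans (Equiv.swap (f1 1) b)
  refine ⟨f2, ?_, ?_⟩
  · have h2 : a ≠ f1 1 := by
      rw [← h1]
      exact f1.injective.ne (by decide)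
    change Equiv.swap (f1 1) b (f1 0) = a
    rw [h1, Equiv.swap_apply_of_ne_of_ne h2 hab]
  · change Equiv.swap (f1 1) b (f1 1) = b
    simp

theorem d3_mem (H : Multigraph) (A : Finset H.V) (hA : Proper H A)
    (h : (H.cutEdges A).card = 3) :
    H.cutEdges A ∈ ((Finset.univ : Finset (Finset H.E)).filter
      fun F => F.card = 3 ∧ H.Disconnects F) := by
  simp only [Finset.mem_filter, Finset.mem_univ, true_and, Multigraph.disconnects_iff]
  exact ⟨h, A, hA.1, hA.2, Finset.Subset.refl _⟩

theorem G0_simple : G0.IsSimple := by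
  constructor
  · change ∀ e : Fin 11, gS e ≠ gT e
    decide
  · change ∀ e f : Fin 11, ((gS e = gS f ∧ gT e = gT f) ∨ (gS e = gT f ∧ gT e = gS f)) → e = f
    decide

theorem classify (H : Multigraph) (hV : H.nV = 6) (hE : H.nE = 11) :
    1 ≤ H.d 2 ∨ 3 ≤ H.d 3 ∨ (2 ≤ H.d 3 ∧ 21 ≤ H.d 4) ∨ IsIso G0 H := by
  have hVV : Fintype.card H.V = 6 := hV
  by_cases h3 : ∀ A, Proper H A → 3 ≤ (H.cutEdges A).card
  swap
  · left
    push Not at h3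
    obtain ⟨A, hA, hlt⟩ := h3
    obtain ⟨F, hF, hc⟩ := Finset.exists_superset_card_eq (s := H.cutEdges A) (n := 2) (by omega)
      (by rw [show Fintype.card H.E = 11 from hE]; omega)
    unfold Multigraph.d
    rw [Nat.one_le_iff_ne_zero, ← Nat.pos_iff_ne_zero, Finset.card_pos]
    refine ⟨F, ?_⟩
    simp only [Finset.mem_filter, Finset.mem_univ, true_and, Multigraph.disconnects_iff]
    exact ⟨hc, A, hA.1, hA.2, hF⟩
  right
  by_cases hd3 : 3 ≤ H.d 3
  · exact Or.inl hd3
  right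
  have hsd : ∀ B C : Finset H.V, B.card ≤ 2 → C.card ≤ 2 → B ≠ C →
      3 ≤ (symmDiff (H.cutEdges B) (H.cutEdges C)).card := by
    intro B C hB hC hne
    rw [← Multigraph.cutEdges_symmDiff]
    apply h3
    have := card_symmDiff_add B C
    apply proper_of_card H hV
    · rw [Finset.card_pos, Finset.nonempty_iff_ne_empty]
      intro h
      exact hne (symmDiff_eq_bot.1 h)
    · omega
  have hinj : ∀ B C : Finset H.V, B.card ≤ 2 → C.card ≤ 2 → H.cutEdges B = H.cutEdges C →
      B = C := by
    intro B C hB hC h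
    by_contra hne
    have := hsd B C hB hC hne
    rw [h, symmDiff_self] at this
    simp at this
  have hs1 : ∀ v : H.V, Proper H {v} := fun v => proper_of_card H hV _ (by simp) (by simp)
  -- any family of small 3-cuts is bounded by `d 3`
  have hfam : ∀ Q : Finset (Finset H.V), (∀ B ∈ Q, 0 < B.card ∧ B.card ≤ 2 ∧
      (H.cutEdges B).card = 3) → Q.card ≤ H.d 3 := by
    intro Q hQ
    rw [← Finset.card_image_of_injOn (f := H.cutEdges) (s := Q)
      (fun B hB C hC h => hinj B C (hQ B hB).2.1 (hQ C hC).2.1 h)]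
    unfold Multigraph.d
    apply Finset.card_le_card
    intro F hF
    obtain ⟨B, hB, rfl⟩ := Finset.mem_image.1 hF
    have := hQ B hB
    exact d3_mem H B (proper_of_card H hV B this.1 (by omega)) this.2.2
  let T := (Finset.univ : Finset H.V).filter fun v => (vstar H v).card = 3
  have hT : T.card ≤ 2 := by
    have := hfam (T.image fun v => ({v} : Finset H.V)) (by
      intro B hB
      obtain ⟨v, hv, rfl⟩ := Finset.mem_image.1 hB
      exact ⟨by simp, by simp, (Finset.mem_filter.1 hv).2⟩)
    rw [Finset.card_image_of_injective _ Finset.singleton_injective] at this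
    omega
  have hsum := vstar_sum_le H hE
  have hge3 : ∀ v, 3 ≤ (vstar H v).card := fun v => h3 _ (hs1 v)
  have hT2 : 2 ≤ T.card := by
    have h1 : ∀ v, 4 ≤ (vstar H v).card + if (vstar H v).card = 3 then 1 else 0 := by
      intro v
      have := hge3 v
      split_ifs <;> omega
    have h2 := Finset.sum_le_sum (s := (Finset.univ : Finset H.V)) fun v _ => h1 v
    rw [Finset.sum_add_distrib, ← Finset.card_filter, Finset.sum_const, Finset.card_univ, hVV] at h2
    change _ ≤ _ + T.card at h2
    simp only [smul_eq_mul] at h2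
    omega
  obtain ⟨a, b, hab, hTab⟩ := Finset.card_eq_two.1 (le_antisymm hT hT2)
  have ha : (vstar H a).card = 3 := by
    have : a ∈ T := by simp [hTab]
    exact (Finset.mem_filter.1 this).2
  have hb : (vstar H b).card = 3 := by
    have : b ∈ T := by simp [hTab]
    exact (Finset.mem_filter.1 this).2
  have hn4 : ∀ v, v ≠ a → v ≠ b → 4 ≤ (vstar H v).card := by
    intro v h1 h2
    have : v ∉ T := by simp [hTab, h1, h2]
    have h5 : (vstar H v).card ≠ 3 := by simpa [T] using this
    have := hge3 v
    omega
  obtain ⟨f, hf0, hf1⟩ := exists_equiv hVV a b hab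
  have hfne : ∀ i : Fin 6, i ≠ 0 → i ≠ 1 → f i ≠ a ∧ f i ≠ b := fun i h0 h1 =>
    ⟨fun h => h0 (f.injective (h.trans hf0.symm)), fun h => h1 (f.injective (h.trans hf1.symm))⟩
  have hf4 : ∀ i : Fin 6, i ≠ 0 → i ≠ 1 → (vstar H (f i)).card = 4 := by
    have hg : ∀ i : Fin 6, i ≠ 0 → i ≠ 1 → 4 ≤ (vstar H (f i)).card := fun i h0 h1 =>
      hn4 _ (hfne i h0 h1).1 (hfne i h0 h1).2
    rw [← Equiv.sum_comp f, Fin.sum_univ_six, hf0, hf1, ha, hb] at hsum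
    have g2 := hg 2 (by decide) (by decide)
    have g3 := hg 3 (by decide) (by decide)
    have g4 := hg 4 (by decide) (by decide)
    have g5 := hg 5 (by decide) (by decide)
    intro i h0 h1
    fin_cases i
    · exact absurd rfl h0
    · exact absurd rfl h1
    · change (vstar H (f 2)).card = 4; omega
    · change (vstar H (f 3)).card = 4; omega
    · change (vstar H (f 4)).card = 4; omega
    · change (vstar H (f 5)).card = 4; omega
  have h4 : ∀ v, v ≠ a → v ≠ b → (vstar H v).card = 4 := by
    intro v h1 h2
    have := hf4 (f.symm v) (by rintro h; apply h1; rw [← hf0, ← h]; simp)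
      (by rintro h; apply h2; rw [← hf1, ← h]; simp)
    simpa using this
  have hd32 : 2 ≤ H.d 3 := by
    have := hfam {{a}, {b}} (by
      intro B hB
      simp only [Finset.mem_insert, Finset.mem_singleton] at hB
      rcases hB with rfl | rfl
      · exact ⟨by simp, by simp, ha⟩
      · exact ⟨by simp, by simp, hb⟩)
    rwa [Finset.card_pair (by simpa using hab)] at this
  by_cases h5 : ∀ A : Finset H.V, A.card = 2 → 5 ≤ (H.cutEdges A).card
  swap
  · left
    refine ⟨hd32, ?_⟩
    push Not at h5
    obtain ⟨A, hA, hlt⟩ := h5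
    have hA3 := h3 A (proper_of_card H hV A (by omega) (by omega))
    have hAn3 : (H.cutEdges A).card ≠ 3 := by
      intro h
      apply hd3
      have := hfam (insert A {{a}, {b}}) (by
        intro B hB
        simp only [Finset.mem_insert, Finset.mem_singleton] at hB
        rcases hB with rfl | rfl | rfl
        · exact ⟨by omega, by omega, h⟩
        · exact ⟨by simp, by simp, ha⟩
        · exact ⟨by simp, by simp, hb⟩)
      rwa [Finset.card_insert_of_notMem, Finset.card_pair (by simpa using hab)] at this
      intro hc
      simp only [Finset.mem_insert, Finset.mem_singleton] at hc
      rcases hc with rfl | rfl <;> simp at hA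
    exact d4_ge H hV hE h3 a b hab ha hb h4 A hA (by omega)
  right
  have hpair : ∀ u v : H.V, u ≠ v →
      5 + 2 * (vstar H u ∩ vstar H v).card ≤ (vstar H u).card + (vstar H v).card := by
    intro u v huv
    have h6 := h5 (symmDiff {u} {v}) (by
      have := card_symmDiff_add ({u} : Finset H.V) {v}
      rw [Finset.singleton_inter_of_notMem (by simpa using huv)] at this
      simpa using this)
    rw [Multigraph.cutEdges_symmDiff] at h6
    have h7 := card_symmDiff_add (vstar H u) (vstar H v)
    change 5 ≤ (symmDiff (vstar H u) (vstar H v)).card at h6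
    omega
  have hle4 : ∀ v, (vstar H v).card ≤ 4 := by
    intro v
    by_cases h1 : v = a
    · rw [h1, ha]; omega
    by_cases h2 : v = b
    · rw [h2, hb]; omega
    exact (h4 v h1 h2).le
  obtain ⟨σ, hσ⟩ := comb (fun i j => (vstar H (f i) ∩ vstar H (f j)).card)
    (fun i j => by simp only [Finset.inter_comm])
    (fun i j hij => by
      have := hpair (f i) (f j) (f.injective.ne hij)
      have := hle4 (f i)
      have := hle4 (f j)
      omega)
    (by
      have := hpair a b hab
      simp only [hf0, hf1]
      omega)
    (by simp [hf0, ha]) (by simp [hf1, hb])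
    (fun i h0 h1 => by simpa using hf4 i h0 h1)
    (fun i => by
      have := vstar_inter_row H (f i)
      rw [← Equiv.sum_comp f] at this
      simp only [Finset.inter_self]
      rw [← this]
      exact Finset.sum_congr rfl fun j _ => by rw [Finset.inter_comm])
  refine isIso_of (G := G0) (H := H) ?_ G0_simple (σ.trans f) ?_
  · rw [hE]; exact Fintype.card_fin 11
  · intro e
    have h := hσ e
    have hne : f (σ (gS e)) ≠ f (σ (gT e)) :=
      f.injective.ne (σ.injective.ne (G0_simple.1 e))
    obtain ⟨x, hx⟩ := Finset.card_pos.1 (h ▸ Nat.one_pos)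
    refine ⟨x, ?_⟩
    have hx1 := (mem_vstar _ _ _).1 (Finset.mem_inter.1 hx).1
    have hx2 := (mem_vstar _ _ _).1 (Finset.mem_inter.1 hx).2
    change (H.src x = f (σ (gS e)) ∧ H.tgt x = f (σ (gT e))) ∨
      (H.src x = f (σ (gT e)) ∧ H.tgt x = f (σ (gS e)))
    rcases hx1 with ⟨p1, p2⟩ | ⟨p1, p2⟩ <;> rcases hx2 with ⟨p3, p4⟩ | ⟨p3, p4⟩
    · exact absurd (p1.symm.trans p3) hne
    · exact Or.inl ⟨p1, p4⟩
    · exact Or.inr ⟨p3, p2⟩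
    · exact absurd (p2.symm.trans p4) hne

/-- Sources of the edges of the second graph. -/
def hS : Fin 11 → Fin 6 := ![0, 0, 0, 1, 1, 1, 1, 2, 2, 2, 4]
/-- Targets of the edges of the second graph. -/
def hT : Fin 11 → Fin 6 := ![3, 4, 5, 2, 3, 4, 5, 3, 4, 5, 5]

/-- The graph on `Fin 6` with 11 edges given by sources and targets. -/
abbrev gr (s t : Fin 11 → Fin 6) : Multigraph where
  V := Fin 6
  E := Fin 11
  src := s
  tgt := t

/-- The complement of `2 P₃`. -/
def G1 : Multigraph := gr hS hT

/-- Cut masks. -/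
def gM : List ℕ := [
  7, 56, 63, 456, 463, 496, 503, 1601, 1606, 1657, 1662, 1929, 1934, 1969, 1974, 658, 661, 682,
  685, 858, 861, 866, 869, 1235, 1236, 1259, 1260, 1307, 1308, 1315, 1316, 1316, 1315, 1308,
  1307, 1260, 1259, 1236, 1235, 869, 866, 861, 858, 685, 682, 661, 658, 1974, 1969, 1934, 1929,
  1662, 1657, 1606, 1601, 503, 496, 463, 456, 63, 56, 7]

/-- Cut masks. -/
def hM : List ℕ := [
  7, 120, 127, 904, 911, 1008, 1015, 145, 150, 233, 238, 793, 798, 865, 870, 1314, 1317, 1370,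
  1373, 1706, 1709, 1746, 1749, 1459, 1460, 1483, 1484, 1595, 1596, 1603, 1604, 1604, 1603,
  1596, 1595, 1484, 1483, 1460, 1459, 1749, 1746, 1709, 1706, 1373, 1370, 1317, 1314, 870, 865,
  798, 793, 238, 233, 150, 145, 1015, 1008, 911, 904, 127, 120, 7]

/-- The set coded by a bit mask. -/
def bits (k n : ℕ) : Finset (Fin k) := Finset.univ.filter fun e => n.testBit e = true

theorem bits_injOn (k : ℕ) : Set.InjOn (bits k) (Finset.range (2 ^ k) : Set ℕ) := by
  intro x hx y hy h
  simp only [Finset.coe_range, Set.mem_Iio] at hx hy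
  apply Nat.eq_of_testBit_eq
  intro i
  by_cases hi : i < k
  · have : (⟨i, hi⟩ : Fin k) ∈ bits k x ↔ (⟨i, hi⟩ : Fin k) ∈ bits k y := by rw [h]
    simpa [bits, ← Bool.eq_iff_iff] using this
  · have hp : 2 ^ k ≤ 2 ^ i := Nat.pow_le_pow_right (by norm_num) (by omega)
    rw [Nat.testBit_eq_false_of_lt (by omega), Nat.testBit_eq_false_of_lt (by omega)]

theorem bits_image (k : ℕ) : (Finset.range (2 ^ k)).image (bits k) = Finset.univ := by
  apply Finset.eq_univ_of_card
  rw [Finset.card_image_of_injOn (bits_injOn k)]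
  simp

theorem bits_surj (k : ℕ) (A : Finset (Fin k)) : ∃ n < 2 ^ k, bits k n = A := by
  have : A ∈ (Finset.range (2 ^ k)).image (bits k) := by rw [bits_image]; exact Finset.mem_univ _
  simpa using this

/-- The number of set bits among the first eleven. -/
def pc (n : ℕ) : ℕ := (List.range 11).countP fun i => n.testBit i

theorem bits_card (n : ℕ) : (bits 11 n).card = pc n := by
  unfold bits pc
  rw [Finset.card_filter]
  simp only [Fin.sum_univ_succ, List.range, List.range.loop, List.countP_cons, List.countP_nil]
  simp
  ring

theorem card_count {k : ℕ} (P : Finset (Fin k) → Prop) [DecidablePred P] (b : ℕ → Bool)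
    (h : ∀ n, P (bits k n) ↔ b n = true) :
    ((Finset.univ : Finset (Finset (Fin k))).filter P).card =
      (List.range (2 ^ k)).countP b := by
  have h1 : (Finset.univ : Finset (Finset (Fin k))).filter P =
      ((Finset.range (2 ^ k)).filter fun n => b n = true).image (bits k) := by
    rw [← bits_image k, Finset.filter_image]
    congr 1
    apply Finset.filter_congr
    intro n _
    exact h n
  rw [h1, Finset.card_image_of_injOn, List.countP_eq_length_filter]
  · generalize 2 ^ k = N
    simp [Finset.card, Finset.range, Multiset.range]
  · exact (bits_injOn k).mono (Finset.coe_subset.2 (Finset.filter_subset _ _))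

/-- The mask list `M` is the list of proper cuts of `gr s t`. -/
def GoodMasks (s t : Fin 11 → Fin 6) (M : List ℕ) : Prop :=
  M.length = 62 ∧ ∀ a < 62, M.getD a 0 < 2048 ∧ ∀ e : Fin 11,
    (M.getD a 0).testBit e = ((a + 1).testBit (s e) != (a + 1).testBit (t e))

theorem gM_good : GoodMasks gS gT gM := by
  unfold GoodMasks; decide +kernel

theorem hM_good : GoodMasks hS hT hM := by
  unfold GoodMasks; decide +kernel

theorem bits_cut {s t : Fin 11 → Fin 6} {M : List ℕ} (hM : GoodMasks s t M) (a : ℕ) (ha : a < 62) :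
    (gr s t).cutEdges (bits 6 (a + 1)) = bits 11 (M.getD a 0) := by
  ext e
  have h := (hM.2 a ha).2 e
  simp only [Multigraph.cutEdges, bits, Finset.mem_filter, Finset.mem_univ, true_and, h]
  change (Nat.testBit (a + 1) (s e) = true ∧ ¬ Nat.testBit (a + 1) (t e) = true) ∨
    (¬ Nat.testBit (a + 1) (s e) = true ∧ Nat.testBit (a + 1) (t e) = true) ↔ _
  cases Nat.testBit (a + 1) (s e) <;> cases Nat.testBit (a + 1) (t e) <;> simp

theorem proper_iff {s t : Fin 11 → Fin 6} {M : List ℕ} (hM : GoodMasks s t M)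
    (P : Finset (Fin 11) → Prop) :
    (∀ A : Finset (gr s t).V, A.Nonempty → A ≠ Finset.univ → P ((gr s t).cutEdges A)) ↔
      ∀ c ∈ M, P (bits 11 c) := by
  have h0 : bits 6 0 = ∅ := by simp [bits]
  have h63 : bits 6 63 = Finset.univ := by
    apply Finset.eq_univ_iff_forall.2
    intro x
    simp only [bits, Finset.mem_filter, Finset.mem_univ, true_and]
    revert x; decide
  constructor
  · intro h c hc
    obtain ⟨a, ha, rfl⟩ := List.getElem_of_mem hc
    have ha' : a < 62 := hM.1 ▸ ha
    have h1 := h (bits 6 (a + 1)) (by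
      rw [Finset.nonempty_iff_ne_empty]
      intro h2
      have h2 : bits 6 (a + 1) = bits 6 0 := h2.trans h0.symm
      have := bits_injOn 6 (by simp; omega) (by simp) h2
      omega) (by
      intro h2
      have h2 : bits 6 (a + 1) = bits 6 63 := h2.trans h63.symm
      have := bits_injOn 6 (by simp; omega) (by simp) h2
      omega)
    rw [bits_cut hM a ha'] at h1
    rwa [List.getD_eq_getElem _ _ ha] at h1
  · intro h A hA hU
    obtain ⟨n, hn, rfl⟩ := bits_surj 6 A
    have hn0 : n ≠ 0 := by
      rintro rfl
      rw [h0] at hA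
      exact Finset.not_nonempty_empty hA
    have hn63 : n ≠ 63 := by
      rintro rfl
      exact hU h63
    obtain ⟨a, rfl⟩ : ∃ a, n = a + 1 := ⟨n - 1, by omega⟩
    have ha : a < 62 := by norm_num at hn; omega
    rw [bits_cut hM a ha]
    have hl : a < M.length := hM.1.symm ▸ ha
    rw [List.getD_eq_getElem _ _ hl]
    exact h _ (List.getElem_mem hl)

theorem bits_lt {s t : Fin 11 → Fin 6} {M : List ℕ} (hM : GoodMasks s t M) :
    ∀ c ∈ M, c < 2048 := by
  intro c hc
  obtain ⟨a, ha, rfl⟩ := List.getElem_of_mem hc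
  have := (hM.2 a (hM.1 ▸ ha)).1
  rwa [List.getD_eq_getElem _ _ ha] at this

theorem conn_bits {s t : Fin 11 → Fin 6} {M : List ℕ} (hM : GoodMasks s t M) (n : ℕ) :
    (gr s t).ConnOn (bits 11 n) ↔ (M.all fun c => (n &&& c) != 0) = true := by
  rw [Multigraph.connOn_iff, proper_iff hM (fun C => ∃ e ∈ bits 11 n, e ∈ C), List.all_eq_true]
  refine forall₂_congr fun c hc => ?_
  have hlt := bits_lt hM c hc
  simp only [bits, Finset.mem_filter, Finset.mem_univ, true_and, bne_iff_ne, ne_eq]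
  constructor
  · rintro ⟨e, h1, h2⟩ h0
    have : (n &&& c).testBit e = true := by rw [Nat.testBit_and, h1, h2]; rfl
    rw [h0] at this
    simp at this
  · intro h
    obtain ⟨i, hi⟩ := Nat.exists_testBit_of_ne_zero h
    rw [Nat.testBit_and, Bool.and_eq_true] at hi
    have hi11 : i < 11 := by
      by_contra hc'
      have hp : 2 ^ 11 ≤ 2 ^ i := Nat.pow_le_pow_right (by norm_num) (by omega)
      rw [Nat.testBit_eq_false_of_lt (n := c) (by omega)] at hi
      simp at hi
    exact ⟨⟨i, hi11⟩, hi.1, hi.2⟩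

theorem disc_bits {s t : Fin 11 → Fin 6} {M : List ℕ} (hM : GoodMasks s t M) (n : ℕ) :
    (gr s t).Disconnects (bits 11 n) ↔ (M.any fun c => (n &&& c) == c) = true := by
  have := proper_iff hM (fun C => ¬ C ⊆ bits 11 n)
  rw [Multigraph.disconnects_iff, List.any_eq_true]
  rw [← not_iff_not]
  push Not
  rw [this]
  refine forall₂_congr fun c hc => ?_
  have hlt := bits_lt hM c hc
  rw [not_iff_comm, not_ne_iff, beq_iff_eq]
  constructor
  · intro h e he
    simp only [bits, Finset.mem_filter, Finset.mem_univ, true_and] at he ⊢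
    rw [← h, Nat.testBit_and, Bool.and_eq_true] at he
    exact he.1
  · intro h
    apply Nat.eq_of_testBit_eq
    intro i
    rw [Nat.testBit_and]
    by_cases hi : i < 11
    · have h1 := @h ⟨i, hi⟩
      simp only [bits, Finset.mem_filter, Finset.mem_univ, true_and] at h1
      cases hh : c.testBit i
      · simp
      · rw [h1 hh]; rfl
    · have hp : 2 ^ 11 ≤ 2 ^ i := Nat.pow_le_pow_right (by norm_num) (by omega)
      rw [Nat.testBit_eq_false_of_lt (n := c) (by omega)]
      simp

theorem c_count {s t : Fin 11 → Fin 6} {M : List ℕ} (hM : GoodMasks s t M) (i : ℕ) :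
    (gr s t).c i =
      (List.range (2 ^ 11)).countP fun n => pc n == i && M.all fun c => (n &&& c) != 0 := by
  unfold Multigraph.c
  refine card_count (fun F => F.card = i ∧ (gr s t).ConnOn F) _ ?_
  intro n
  rw [Bool.and_eq_true, ← conn_bits hM, bits_card, beq_iff_eq]

theorem d_count {s t : Fin 11 → Fin 6} {M : List ℕ} (hM : GoodMasks s t M) (i : ℕ) :
    (gr s t).d i =
      (List.range (2 ^ 11)).countP fun n => pc n == i && M.any fun c => (n &&& c) == c := by
  unfold Multigraph.d
  refine card_count (fun F => F.card = i ∧ (gr s t).Disconnects F) _ ?_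
  intro n
  rw [Bool.and_eq_true, ← disc_bits hM, bits_card, beq_iff_eq]

theorem G0_c5 : G0.c 5 = 224 := by
  refine (c_count gM_good 5).trans ?_
  decide +kernel

theorem G1_c5 : G1.c 5 = 225 := by
  refine (c_count hM_good 5).trans ?_
  decide +kernel

theorem G0_c_lt (i : ℕ) (hi : i < 5) : G0.c i = 0 := by
  refine (c_count gM_good i).trans ?_
  revert i
  decide +kernel

theorem G0_d_lt (i : ℕ) (hi : i < 3) : G0.d i = 0 := by
  refine (d_count gM_good i).trans ?_
  revert i
  decide +kernel

theorem G0_d3 : G0.d 3 = 2 := by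
  refine (d_count gM_good 3).trans ?_
  decide +kernel

theorem G0_d4 : G0.d 4 = 20 := by
  refine (d_count gM_good 4).trans ?_
  decide +kernel

theorem bits_full : bits 11 2047 = Finset.univ := by
  apply Finset.eq_univ_iff_forall.2
  intro x
  simp only [bits, Finset.mem_filter, Finset.mem_univ, true_and]
  revert x; decide

theorem G0_mem : memG G0 6 11 := by
  refine ⟨Fintype.card_fin 6, Fintype.card_fin 11, ?_⟩
  have := (conn_bits gM_good 2047).2 (by decide +kernel)
  rw [bits_full] at this
  exact this

theorem G1_mem : memG G1 6 11 := by
  refine ⟨Fintype.card_fin 6, Fintype.card_fin 11, ?_⟩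
  have := (conn_bits hM_good 2047).2 (by decide +kernel)
  rw [bits_full] at this
  exact this

/-- Vertices of the Petersen graph. -/
abbrev PV := Fin 5 × Bool
/-- Edges of the Petersen graph. -/
abbrev PE := Fin 5 ⊕ Fin 5 ⊕ Fin 5
/-- Sources of the Petersen graph. -/
def pS (e : PE) : PV := petersen.src e
/-- Targets of the Petersen graph. -/
def pT (e : PE) : PV := petersen.tgt e

theorem weak_sub (s t : Fin 11 → Fin 6) (hs : (gr s t).IsSimple) (w : PE → ℕ) (cls : PV → Fin 6)
    (rep : Fin 6 → PV) (hw : ∀ e, w e ≤ 1) (hsum : ∑ e, w e = 11)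
    (hz : ((Finset.univ : Finset PE).filter fun e => w e = 0).card = 4)
    (hc : ∀ e, w e = 0 → cls (pS e) = cls (pT e))
    (hrep : ∀ i, cls (rep i) = i)
    (hcon : ∀ v, v = rep (cls v) ∨ ∃ e, w e = 0 ∧
      ((pS e = v ∧ pT e = rep (cls v)) ∨ (pS e = rep (cls v) ∧ pT e = v)))
    (hed : ∀ e : Fin 11, ∃ f, w f = 1 ∧
      ((cls (pS f) = s e ∧ cls (pT f) = t e) ∨ (cls (pS f) = t e ∧ cls (pT f) = s e))) :
    (∃ w : petersen.E → ℕ, IsWeakSubdivision (gr s t) petersen w ∧ BalancedWeights w) := by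
  let W : petersen.E → ℕ := w
  have hW : ∀ e, W e ≤ 1 := hw
  let mk : PV → Quot (zeroRel petersen W) := fun v => Quot.mk _ v
  have hmk : ∀ v : PV, mk (rep (cls v)) = mk v := by
    intro v
    rcases hcon v with h | ⟨e, he, ⟨h1, h2⟩ | ⟨h1, h2⟩⟩
    · rw [← h]
    · exact (Quot.sound ⟨e, he, h1, h2⟩).symm
    · exact Quot.sound ⟨e, he, h1, h2⟩
  let q : Fin 6 ≃ Quot (zeroRel petersen W) :=
    { toFun := fun i => mk (rep i)
      invFun := Quot.lift cls (by
        rintro u v ⟨e, he, rfl, rfl⟩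
        exact hc e he)
      left_inv := fun i => hrep i
      right_inv := by
        intro x
        obtain ⟨v, rfl⟩ := Quot.exists_rep x
        exact hmk v }
  have hemp : IsEmpty (Σ f : petersen.E, Fin (W f - 1)) := by
    constructor
    rintro ⟨f, k⟩
    have := hW f
    have := k.2
    omega
  refine ⟨W, ⟨?_, ?_⟩, ?_⟩
  · unfold ZeroAcyclic
    have h1 : Fintype.card (Quot (zeroRel petersen W)) = 6 := by
      rw [← Fintype.card_congr q, Fintype.card_fin]
    have h2 : (Finset.univ.filter fun e : petersen.E => W e = 0).card = 4 := hz
    rw [h1, h2]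
    rfl
  · let σ : (gr s t).V ≃ (subdivide petersen W).V := q.trans (Equiv.sumEmpty _ _).symm
    refine isIso_of ?_ hs σ ?_
    · have h1 : (gr s t).nE = 11 := Fintype.card_fin 11
      have h2 : (subdivide petersen W).nE = 11 := by
        have : Fintype.card (Σ f : petersen.E, Fin (W f)) = 11 := by
          rw [Fintype.card_sigma]
          simp only [Fintype.card_fin]
          exact hsum
        rw [← this]
        exact Fintype.card_congr (Equiv.refl _)
      rw [h1, h2]
    · intro e
      obtain ⟨f, hf, h⟩ := hed e
      have hf' : 0 < W f := by change 0 < w f; omega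
      refine ⟨⟨f, ⟨0, hf'⟩⟩, ?_⟩
      have e1 : (subdivide petersen W).src ⟨f, ⟨0, hf'⟩⟩ = σ (cls (pS f)) := by
        have : chainNode petersen W f 0 = Sum.inl (mk (pS f)) := by
          simp [chainNode]; rfl
        refine this.trans ?_
        rw [← hmk]
        rfl
      have e2 : (subdivide petersen W).tgt ⟨f, ⟨0, hf'⟩⟩ = σ (cls (pT f)) := by
        have : chainNode petersen W f 1 = Sum.inl (mk (pT f)) := by
          have hf1 : ¬ (1 < W f) := by change ¬ 1 < w f; omega
          simp [chainNode, hf1]; rfl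
        refine this.trans ?_
        rw [← hmk]
        rfl
      rw [e1, e2]
      rcases h with ⟨h1, h2⟩ | ⟨h1, h2⟩
      · left; rw [h1, h2]; exact ⟨rfl, rfl⟩
      · right; rw [h1, h2]; exact ⟨rfl, rfl⟩
  · intro e f
    have := hW e
    omega

/-- Chain lengths for the first graph. -/
def w0 : PE → ℕ
  | Sum.inl i => ![0, 1, 0, 1, 1] i
  | Sum.inr (Sum.inl i) => ![1, 1, 1, 1, 0] i
  | Sum.inr (Sum.inr i) => ![1, 1, 1, 0, 1] i

/-- Chain lengths for the second graph. -/
def w1 : PE → ℕ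
  | Sum.inl i => ![0, 1, 0, 1, 1] i
  | Sum.inr (Sum.inl i) => ![1, 1, 1, 1, 0] i
  | Sum.inr (Sum.inr i) => ![0, 1, 1, 1, 1] i

/-- Vertex classes for the first graph. -/
def cls0 (v : PV) : Fin 6 := if v.2 = true then ![5, 1, 0, 5, 4] v.1 else ![2, 2, 3, 3, 4] v.1

/-- Vertex classes for the second graph. -/
def cls1 (v : PV) : Fin 6 := if v.2 = true then ![5, 3, 5, 0, 2] v.1 else ![1, 1, 4, 4, 2] v.1

/-- Class representatives for the first graph. -/
def rep0 : Fin 6 → PV := ![(2, true), (1, true), (0, false), (2, false), (4, true), (0, true)]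

/-- Class representatives for the second graph. -/
def rep1 : Fin 6 → PV := ![(3, true), (0, false), (4, true), (1, true), (2, false), (0, true)]

theorem G1_simple : G1.IsSimple := by
  constructor
  · change ∀ e : Fin 11, hS e ≠ hT e
    decide
  · change ∀ e f : Fin 11, ((hS e = hS f ∧ hT e = hT f) ∨ (hS e = hT f ∧ hT e = hS f)) → e = f
    decide

theorem G0_weak : ∃ w : petersen.E → ℕ, IsWeakSubdivision G0 petersen w ∧ BalancedWeights w :=
  weak_sub gS gT G0_simple w0 cls0 rep0 (by decide) (by decide) (by decide) (by decide)
    (by decide) (by decide) (by decide)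

theorem G1_weak : ∃ w : petersen.E → ℕ, IsWeakSubdivision G1 petersen w ∧ BalancedWeights w :=
  weak_sub hS hT G1_simple w1 cls1 rep1 (by decide) (by decide) (by decide) (by decide)
    (by decide) (by decide) (by decide)

/-- Degrees, computably. -/
def degC (s t : Fin 11 → Fin 6) (v : Fin 6) : ℕ :=
  (Finset.univ.filter fun e => s e = v).card + (Finset.univ.filter fun e => t e = v).card

theorem deg_eq (s t : Fin 11 → Fin 6) (v : Fin 6) : (gr s t).deg v = degC s t v := by
  unfold Multigraph.deg degC
  congr 1 <;> congr 1 <;> ext e <;> simp only [Finset.mem_filter]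

theorem G0_deg (v : Fin 6) : G0.deg v = ![3, 3, 4, 4, 4, 4] v := by
  refine (deg_eq gS gT v).trans ?_
  revert v; decide

theorem G1_deg (v : Fin 6) : G1.deg v = ![3, 4, 4, 3, 4, 4] v := by
  refine (deg_eq hS hT v).trans ?_
  revert v; decide

theorem deg_card {f : Fin 6 → ℕ} (k m : ℕ) (g : Fin 6 → ℕ) (h : ∀ v, f v = g v)
    (hg : ((Finset.univ : Finset (Fin 6)).filter fun v => g v = k).card = m) :
    ((Finset.univ : Finset (Fin 6)).filter fun v => f v = k).card = m := by
  obtain rfl : f = g := funext h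
  exact hg

theorem treeCount_eq (G : Multigraph) (h : G.nV = 6) : G.treeCount = G.c 5 := by
  unfold Multigraph.treeCount Multigraph.c
  rw [h]
  congr 1
  ext S
  simp only [Finset.mem_filter, Finset.mem_univ, true_and]
  constructor <;> rintro ⟨h1, h2⟩ <;> exact ⟨by omega, h2⟩

theorem small_p (p : ℝ) (hp : 0 < p) (hp1 : p < 1 / 100000) : G0.rel p < G1.rel p := by
  have hq0 : 0 < 1 - p := by linarith
  have hq1 : 1 - p ≤ 1 := by linarith
  have hp1' : p ≤ 1 := by linarith
  have hE0 : G0.nE = 11 := G0_mem.2.1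
  have hE1 : G1.nE = 11 := G1_mem.2.1
  have h0 : G0.rel p ≤ 224 * (p ^ 5 * (1 - p) ^ 6) + 6 * (2048 * p ^ 6) := by
    have hb : ∀ i, 6 ≤ i → (G0.c i : ℝ) * (p ^ i * (1 - p) ^ (11 - i)) ≤ 2048 * p ^ 6 := by
      intro i hi
      have h1 : (G0.c i : ℝ) ≤ 2048 := by
        have := G0.c_le i
        rw [hE0] at this
        exact_mod_cast this
      have h2 : p ^ i ≤ p ^ 6 := pow_le_pow_of_le_one hp.le hp1' hi
      have h3 : (1 - p) ^ (11 - i) ≤ 1 := pow_le_one₀ hq0.le hq1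
      have h4 : p ^ i * (1 - p) ^ (11 - i) ≤ p ^ 6 * 1 :=
        mul_le_mul h2 h3 (by positivity) (by positivity)
      rw [mul_one] at h4
      exact mul_le_mul h1 h4 (by positivity) (by norm_num)
    rw [Multigraph.rel_eq_c, hE0]
    simp only [Finset.sum_range_succ, Finset.sum_range_zero]
    rw [G0_c_lt 0 (by norm_num), G0_c_lt 1 (by norm_num), G0_c_lt 2 (by norm_num),
      G0_c_lt 3 (by norm_num), G0_c_lt 4 (by norm_num), G0_c5]
    have b6 := hb 6 (by norm_num)
    have b7 := hb 7 (by norm_num)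
    have b8 := hb 8 (by norm_num)
    have b9 := hb 9 (by norm_num)
    have b10 := hb 10 (by norm_num)
    have b11 := hb 11 (by norm_num)
    norm_num only [Nat.cast_zero, zero_mul, zero_add] at *
    linarith
  have h1 : 225 * (p ^ 5 * (1 - p) ^ 6) ≤ G1.rel p := by
    rw [Multigraph.rel_eq_c, hE1]
    have := Finset.single_le_sum (s := Finset.range (11 + 1))
      (f := fun i => (G1.c i : ℝ) * (p ^ i * (1 - p) ^ (11 - i)))
      (fun i _ => by positivity) (Finset.mem_range.2 (by norm_num : 5 < 11 + 1))
    simp only [G1_c5] at this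
    exact_mod_cast this
  have h6 : 1 / 2 ≤ (1 - p) ^ 6 := by
    have := one_add_mul_le_pow (a := -p) (by linarith) 6
    rw [← sub_eq_add_neg] at this
    push_cast at this
    linarith
  have hp5 : 0 < p ^ 5 := by positivity
  have : 6 * (2048 * p ^ 6) < p ^ 5 * (1 - p) ^ 6 := by
    have : 6 * (2048 * p ^ 6) = p ^ 5 * (12288 * p) := by ring
    rw [this]
    apply mul_lt_mul_of_pos_left _ hp5
    linarith
  linarith

theorem large_p (H : Multigraph) (hH : memG H 6 11) (hiso : ¬ IsIso G0 H) (p : ℝ)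
    (hp0 : 1 - 1 / 100000 < p) (hp1 : p < 1) : H.rel p < G0.rel p := by
  obtain ⟨q, rfl⟩ : ∃ q, p = 1 - q := ⟨1 - p, by ring⟩
  have hq0 : 0 < q := by linarith
  have hq : q < 1 / 100000 := by linarith
  set p := 1 - q with hpq
  have hp : 0 < p := by linarith
  have hqp : 1 - p = q := by rw [hpq]; ring
  have hE0 : G0.nE = 11 := G0_mem.2.1
  have hE1 : H.nE = 11 := hH.2.1
  have hG := G0.one_sub_rel p
  have hHr := H.one_sub_rel p
  rw [hE0, hqp] at hG
  rw [hE1, hqp] at hHr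
  have hGle : 1 - G0.rel p ≤ 2 * (q ^ 3 * p ^ 8) + 20 * (q ^ 4 * p ^ 7) + 7 * (2048 * q ^ 5) := by
    have hb : ∀ i, 5 ≤ i → (G0.d i : ℝ) * (q ^ i * p ^ (11 - i)) ≤ 2048 * q ^ 5 := by
      intro i hi
      have h1 : (G0.d i : ℝ) ≤ 2048 := by
        have := G0.d_le i
        rw [hE0] at this
        exact_mod_cast this
      have h2 : q ^ i ≤ q ^ 5 := pow_le_pow_of_le_one hq0.le (by linarith) hi
      have h3 : p ^ (11 - i) ≤ 1 := pow_le_one₀ hp.le hp1.le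
      have h4 : q ^ i * p ^ (11 - i) ≤ q ^ 5 * 1 :=
        mul_le_mul h2 h3 (by positivity) (by positivity)
      rw [mul_one] at h4
      exact mul_le_mul h1 h4 (by positivity) (by norm_num)
    rw [hG]
    simp only [Finset.sum_range_succ, Finset.sum_range_zero]
    rw [G0_d_lt 0 (by norm_num), G0_d_lt 1 (by norm_num), G0_d_lt 2 (by norm_num), G0_d3, G0_d4]
    have b5 := hb 5 (by norm_num)
    have b6 := hb 6 (by norm_num)
    have b7 := hb 7 (by norm_num)
    have b8 := hb 8 (by norm_num)
    have b9 := hb 9 (by norm_num)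
    have b10 := hb 10 (by norm_num)
    have b11 := hb 11 (by norm_num)
    norm_num only [Nat.cast_zero, zero_mul, zero_add] at *
    linarith
  have hsub : ∀ s : Finset ℕ, s ⊆ Finset.range (11 + 1) →
      ∑ i ∈ s, (H.d i : ℝ) * (q ^ i * p ^ (11 - i)) ≤ 1 - H.rel p := by
    intro s hs
    rw [hHr]
    exact Finset.sum_le_sum_of_subset_of_nonneg hs fun i _ _ => by positivity
  have h9 : 1 / 2 ≤ p ^ 9 := by
    have := one_add_mul_le_pow (a := -q) (by linarith) 9
    rw [← sub_eq_add_neg] at this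
    push_cast at this
    linarith
  have h8 : 1 / 2 ≤ p ^ 8 := h9.trans (pow_le_pow_of_le_one hp.le hp1.le (by norm_num))
  have h7 : 1 / 2 ≤ p ^ 7 := h9.trans (pow_le_pow_of_le_one hp.le hp1.le (by norm_num))
  have h8' : p ^ 8 ≤ 1 := pow_le_one₀ hp.le hp1.le
  have h7' : p ^ 7 ≤ 1 := pow_le_one₀ hp.le hp1.le
  have hq2 : q ^ 2 ≤ q := by nlinarith
  have hq3 : q ^ 3 ≤ q := by nlinarith
  have hqp7 : q * p ^ 7 ≤ q := by nlinarith
  have hqp8 : q * p ^ 8 ≤ q := by nlinarith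
  have hq2p7 : q ^ 2 * p ^ 7 ≤ q ^ 2 := by nlinarith [sq_nonneg q]
  suffices h : 2 * (q ^ 3 * p ^ 8) + 20 * (q ^ 4 * p ^ 7) + 7 * (2048 * q ^ 5) < 1 - H.rel p by
    linarith
  rcases classify H hH.1 hH.2.1 with h | h | ⟨h, h'⟩ | h
  · have h1 := hsub {2} (by decide)
    rw [Finset.sum_singleton] at h1
    have h2 : (1 : ℝ) ≤ H.d 2 := by exact_mod_cast h
    have h3 : 1 * (q ^ 2 * p ^ 9) ≤ H.d 2 * (q ^ 2 * p ^ 9) :=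
      mul_le_mul_of_nonneg_right h2 (by positivity)
    have h4 : 0 < q ^ 2 * (p ^ 9 - 2 * (q * p ^ 8) - 20 * (q ^ 2 * p ^ 7) - 14336 * q ^ 3) := by
      apply mul_pos (by positivity)
      linarith
    norm_num only at h1
    linarith
  · have h1 := hsub {3} (by decide)
    rw [Finset.sum_singleton] at h1
    have h2 : (3 : ℝ) ≤ H.d 3 := by exact_mod_cast h
    have h3 : 3 * (q ^ 3 * p ^ 8) ≤ H.d 3 * (q ^ 3 * p ^ 8) :=
      mul_le_mul_of_nonneg_right h2 (by positivity)
    have h4 : 0 < q ^ 3 * (p ^ 8 - 20 * (q * p ^ 7) - 14336 * q ^ 2) := by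
      apply mul_pos (by positivity)
      linarith
    norm_num only at h1
    linarith
  · have h1 := hsub {3, 4} (by decide)
    rw [Finset.sum_pair (by norm_num)] at h1
    have h2 : (2 : ℝ) ≤ H.d 3 := by exact_mod_cast h
    have h2' : (21 : ℝ) ≤ H.d 4 := by exact_mod_cast h'
    have h3 : 2 * (q ^ 3 * p ^ 8) ≤ H.d 3 * (q ^ 3 * p ^ 8) :=
      mul_le_mul_of_nonneg_right h2 (by positivity)
    have h3' : 21 * (q ^ 4 * p ^ 7) ≤ H.d 4 * (q ^ 4 * p ^ 7) :=
      mul_le_mul_of_nonneg_right h2' (by positivity)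
    have h4 : 0 < q ^ 4 * (p ^ 7 - 14336 * q) := by
      apply mul_pos (by positivity)
      linarith
    norm_num only at h1
    linarith
  · exact absurd h hiso

theorem G0_opt (p : ℝ) (hp0 : 1 - 1 / 100000 < p) (hp1 : p < 1) : pOptimal G0 6 11 p := by
  refine ⟨G0_mem, fun H hH => ?_⟩
  by_cases h : IsIso G0 H
  · exact (h.rel_eq p).ge
  · exact (large_p H hH h p hp0 hp1).le

/-- in 𝒢_{6,11} the unique graph optimal for p near 1 is the simple graph
G with degree sequence (4,4,4,4,3,3) whose degree-3 vertices are non-adjacent (a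
balanced weak subdivision of the Petersen graph, with 224 spanning trees); the other
simple graph G' with that degree sequence (degree-3 vertices adjacent, also a balanced
weak subdivision of Petersen) has 225 spanning trees and beats G for p near 0;
hence no uniquely optimal graph exists in 𝒢_{6,11}. -/
theorem no_uniquely_optimal_6_11 :
    ∃ G G' : Multigraph,
      memG G 6 11 ∧ memG G' 6 11 ∧
      G.IsSimple ∧
      (Finset.univ.filter fun v : G.V => G.deg v = 4).card = 4 ∧
      (Finset.univ.filter fun v : G.V => G.deg v = 3).card = 2 ∧
      (∀ u v : G.V, G.deg u = 3 → G.deg v = 3 → u ≠ v → ¬ G.Adj u v) ∧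
      (∃ w : petersen.E → ℕ,
        IsWeakSubdivision G petersen w ∧ BalancedWeights w) ∧
      G'.IsSimple ∧
      (Finset.univ.filter fun v : G'.V => G'.deg v = 4).card = 4 ∧
      (Finset.univ.filter fun v : G'.V => G'.deg v = 3).card = 2 ∧
      (∃ u v : G'.V, G'.deg u = 3 ∧ G'.deg v = 3 ∧ u ≠ v ∧ G'.Adj u v) ∧
      (∃ w : petersen.E → ℕ,
        IsWeakSubdivision G' petersen w ∧ BalancedWeights w) ∧
      (∃ p₀ : ℝ, 0 < p₀ ∧ p₀ < 1 ∧ ∀ p : ℝ, p₀ < p → p < 1 →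
        pOptimal G 6 11 p ∧
        ∀ H : Multigraph, pOptimal H 6 11 p → IsIso G H) ∧
      G.treeCount = 224 ∧ G'.treeCount = 225 ∧
      (∃ p₁ : ℝ, 0 < p₁ ∧ p₁ < 1 ∧ ∀ p : ℝ, 0 < p → p < p₁ →
        G.rel p < G'.rel p) ∧
      ¬ ∃ H : Multigraph, UniquelyOptimal H 6 11 := by
  refine ⟨G0, G1, G0_mem, G1_mem, G0_simple, ?_, ?_, ?_, G0_weak, G1_simple, ?_, ?_, ?_, G1_weak,
    ?_, ?_, ?_, ?_, ?_⟩
  · exact deg_card (f := G0.deg) 4 4 _ G0_deg (by decide)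
  · exact deg_card (f := G0.deg) 3 2 _ G0_deg (by decide)
  · intro u v hu hv huv
    have hu : ![3, 3, 4, 4, 4, 4] u = 3 := (G0_deg u).symm.trans hu
    have hv : ![3, 3, 4, 4, 4, 4] v = 3 := (G0_deg v).symm.trans hv
    have key : ∀ u v : Fin 6, ![3, 3, 4, 4, 4, 4] u = 3 → ![3, 3, 4, 4, 4, 4] v = 3 → u ≠ v →
      ¬ ∃ e : Fin 11, (gS e = u ∧ gT e = v) ∨ (gS e = v ∧ gT e = u) := by decide
    exact key u v hu hv huv
  · exact deg_card (f := G1.deg) 4 4 _ G1_deg (by decide)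
  · exact deg_card (f := G1.deg) 3 2 _ G1_deg (by decide)
  · exact ⟨(0 : Fin 6), (3 : Fin 6), G1_deg 0, G1_deg 3, by change (0 : Fin 6) ≠ 3; decide,
      (0 : Fin 11), Or.inl ⟨rfl, rfl⟩⟩
  · refine ⟨1 - 1 / 100000, by norm_num, by norm_num, fun p hp0 hp1 =>
      ⟨G0_opt p hp0 hp1, fun H hH => ?_⟩⟩
    by_contra h
    exact absurd (hH.2 G0 G0_mem) (not_le.2 (large_p H hH.1 h p hp0 hp1))
  · rw [treeCount_eq _ G0_mem.1, G0_c5]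
  · rw [treeCount_eq _ G1_mem.1, G1_c5]
  · exact ⟨1 / 100000, by norm_num, by norm_num, fun p hp0 hp1 => small_p p hp0 hp1⟩
  · rintro ⟨H, hH, hopt⟩
    have hs := small_p (1 / 1000000) (by norm_num) (by norm_num)
    by_cases h0 : IsIso H G0
    · by_cases h1 : IsIso H G1
      · rw [← h0.rel_eq, ← h1.rel_eq] at hs
        exact lt_irrefl _ hs
      · have := hopt G1 G1_mem h1 (1 / 1000000) (by norm_num) (by norm_num)
        rw [h0.rel_eq] at this
        exact lt_asymm hs this
    · have h1 := hopt G0 G0_mem h0 (1 - 1 / 1000000) (by norm_num) (by norm_num)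
      exact absurd ((G0_opt (1 - 1 / 1000000) (by norm_num) (by norm_num)).2 H hH) (not_le.2 h1)
end
end
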